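/- Fix θ ∈ [1/4, 1) and β with 0 < β < min{θ, 1/2}. There is a constant C > 0 depending only on θ and β with the following property. Let Y₁ and Y₂ each be as in the context, both satisfying the well-stretched condition with constant λ > 0 and ‖Y₁‖_{Ḣ^{2+θ}(𝕋)}, ‖Y₂‖_{Ḣ^{2+θ}(𝕋)} < ∞, and let g_{Y₁} and g_{Y₂} be as in the context. Then ‖g_{Y₁} − g_{Y₂}‖_{L²(𝕋)} ≤ C λ^{−2} ( ‖Y₁‖_{Ḣ^{2+θ}(𝕋)} + ‖Y₂‖_{Ḣ^{2+θ}(𝕋)} )² ‖Y₁ − Y₂‖_{Ḣ^{1/2−β}(𝕋)}. -/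

import Mathlib

open MeasureTheory Real Filter Topology
open scoped RealInnerProductSpace ENNReal

noncomputable section

abbrev E2 : Type := EuclideanSpace ℝ (Fin 2)

/-- Squared modulus of the `k`-th Fourier coefficient
`ĝ_k = ∫_{-π}^{π} g(s) e^{-iks} ds` (componentwise complexified). -/
def coefSq (g : ℝ → E2) (k : ℤ) : ℝ :=
  ∑ j : Fin 2,
    Complex.normSq (∫ s in (-π)..π, (g s j : ℂ) * Complex.exp (-Complex.I * (k : ℂ) * (s : ℂ)))

/-- Summand of the homogeneous Sobolev seminorm: `|k|^{2σ} |ĝ_k|²` for `k ≠ 0`. -/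
def sobSummand (σ : ℝ) (g : ℝ → E2) (k : ℤ) : ℝ :=
  if k = 0 then 0 else (|k| : ℝ) ^ (2 * σ) * coefSq g k

/-- The homogeneous Sobolev seminorm `‖g‖_{Ḣ^σ(𝕋)} = (Σ_{k≠0} |k|^{2σ} |ĝ_k|²)^{1/2}`. -/
def sobNorm (σ : ℝ) (g : ℝ → E2) : ℝ := Real.sqrt (∑' k : ℤ, sobSummand σ g k)

/-- The `L²(𝕋)` norm (vector-valued). -/
def normL2v (g : ℝ → E2) : ℝ := Real.sqrt (∫ s in (-π)..π, ‖g s‖ ^ 2)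

/-- The nonlinear remainder `g_Y` in the contour dynamic equation (Hookean case):
`g_Y(s) = (1/4π) ∫_{−π}^{π} [ (−|Y'(s+τ)|²/|L|² + 2(L·Y'(s+τ))²/|L|⁴ − 1) L/τ
+ (1/τ − τ/(4 sin²(τ/2))) L ] dτ` with `L = (Y(s+τ) − Y(s))/τ`. -/
def gY (Y Y' : ℝ → E2) (s : ℝ) : E2 :=
  ((4 * π)⁻¹ : ℝ) • ∫ τ in (-π)..π,
    (((-‖Y' (s + τ)‖ ^ 2 / ‖τ⁻¹ • (Y (s + τ) - Y s)‖ ^ 2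
          + 2 * (⟪τ⁻¹ • (Y (s + τ) - Y s), Y' (s + τ)⟫) ^ 2 /
              ‖τ⁻¹ • (Y (s + τ) - Y s)‖ ^ 4
          - 1) / τ
        + (1 / τ - τ / (4 * Real.sin (τ / 2) ^ 2))) • (τ⁻¹ • (Y (s + τ) - Y s)))

/-!
Identify the plane with `ℂ` and let `a = L(s, τ)` be the secant and `p = ∂_τ a`, so that the velocity
is `Y'(s + τ) = a + τ p`. The integrand of `g_Y` becomes `P_a (p + τ p² / (2 a)) + κ(τ) a`, where
`P_a z = z + (a / ā) z̄` is twice the projection onto the line `ℝ a` and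
`κ(τ) = 1/τ - τ / (4 sin² (τ/2))` is bounded.

For two curves, with data `(a, p)` and `(b, q)`, the terms of the difference of the integrands that
contain `p - q` form, up to terms carrying only the factor `a - b`, the exact `τ`-derivative of
`P_a ((1 + τ (p + q) / (2 a)) (a - b))`, whose integral leaves boundary values at `τ = ±π` only.
In the remaining terms `a - b`, the secant of `Y₁ - Y₂`, is multiplied by `p`, `q` or a second
derivative, which lie in `Ḣ^θ` and have mean zero. The product estimate
`‖f g‖_{L²} ≲ ‖f‖_{Ḣ^θ} ‖g‖_{Ḣ^δ}` for `θ + δ > 1/2`, applied with the secant bound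
`‖a - b‖_{Ḣ^δ} ≲ |τ|^(ε-1) ‖Y₁ - Y₂‖_{Ḣ^(δ+ε)}` and `δ + ε = 1/2 - β`, makes the integral over `τ`
converge; this is why `β < θ` is enough.

The integration by parts needs `C²` curves. A `C¹` curve is first replaced by its Steklov averages,
whose Sobolev seminorms are no larger, and Fatou's lemma passes to the limit.
-/

open scoped ComplexConjugate

/-! ### Fourier coefficients and Sobolev seminorms of periodic functions -/

section LpTwo

variable {α β E : Type*} [MeasurableSpace α] [MeasurableSpace β] {μ : Measure α} {ν : Measure β}

theorem eLpNorm_two_sq [ENorm E] (f : α → E) : eLpNorm f 2 μ ^ 2 = ∫⁻ a, ‖f a‖ₑ ^ 2 ∂μ := by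
  simpa using eLpNorm_nnreal_pow_eq_lintegral (f := f) (μ := μ) (p := 2) two_ne_zero

theorem lintegral_mul_le_eLpNorm_two_mul_eLpNorm_two {f g : α → ℝ≥0∞} (hf : AEMeasurable f μ)
    (hg : AEMeasurable g μ) : ∫⁻ a, f a * g a ∂μ ≤ eLpNorm f 2 μ * eLpNorm g 2 μ := by
  simpa [eLpNorm_eq_lintegral_rpow_enorm_toReal two_ne_zero ENNReal.ofNat_ne_top] using
    ENNReal.lintegral_mul_le_Lp_mul_Lq μ HolderConjugate.two_two hf hg

theorem eLpNorm_two_lintegral_le [SFinite μ] [SFinite ν] {G : α → β → ℝ≥0∞}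
    (hG : Measurable (Function.uncurry G)) :
    eLpNorm (fun a => ∫⁻ b, G a b ∂ν) 2 μ ≤ ∫⁻ b, eLpNorm (fun a => G a b) 2 μ ∂ν := by
  have hGa (a : α) : Measurable (G a) := hG.comp measurable_prodMk_left
  have hGb (b : β) : Measurable fun a => G a b := hG.comp measurable_prodMk_right
  have hN : Measurable fun b => eLpNorm (fun a => G a b) 2 μ := by
    simp only [eLpNorm_eq_lintegral_rpow_enorm_toReal two_ne_zero ENNReal.ofNat_ne_top]
    exact ((hG.comp measurable_swap).enorm.pow_const _).lintegral_prod_right'.pow_const _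
  have hGG : Measurable fun x : α × β × β => G x.1 x.2.1 * G x.1 x.2.2 :=
    (hG.comp (measurable_fst.prodMk measurable_snd.fst)).mul
      (hG.comp (measurable_fst.prodMk measurable_snd.snd))
  rw [← ENNReal.pow_le_pow_left_iff two_ne_zero]
  calc eLpNorm (fun a => ∫⁻ b, G a b ∂ν) 2 μ ^ 2
      = ∫⁻ a, ∫⁻ z, G a z.1 * G a z.2 ∂ν.prod ν ∂μ := by
        rw [eLpNorm_two_sq]
        simp only [enorm_eq_self, sq, lintegral_prod_mul, (hGa _).aemeasurable]
    _ = ∫⁻ z, ∫⁻ a, G a z.1 * G a z.2 ∂μ ∂ν.prod ν := lintegral_lintegral_swap hGG.aemeasurable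
    _ ≤ ∫⁻ z, eLpNorm (fun a => G a z.1) 2 μ * eLpNorm (fun a => G a z.2) 2 μ ∂ν.prod ν :=
        lintegral_mono fun z => lintegral_mul_le_eLpNorm_two_mul_eLpNorm_two
          (hGb z.1).aemeasurable (hGb z.2).aemeasurable
    _ = (∫⁻ b, eLpNorm (fun a => G a b) 2 μ ∂ν) ^ 2 := by
        rw [lintegral_prod_mul hN.aemeasurable hN.aemeasurable, sq]

end LpTwo

section Convolution

open AddCircle

theorem hasSum_fourierCoeff_mul {T : ℝ} [Fact (0 < T)] {f g : AddCircle T → ℂ}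
    (hf : MemLp f 2 haarAddCircle) (hg : MemLp g 2 haarAddCircle) (n : ℤ) :
    HasSum (fun k => fourierCoeff f (n - k) * fourierCoeff g k)
      (fourierCoeff (fun t => f t * g t) n) := by
  have hu : MemLp (fun t => fourier n t * conj (f t)) 2 haarAddCircle :=
    (hf.star).of_le_mul (c := 1)
      ((fourier n).continuous.aestronglyMeasurable.mul hf.star.aestronglyMeasurable)
      (.of_forall fun t => by
        simp only [norm_mul, RCLike.norm_conj, fourier_apply, Circle.norm_coe, Pi.star_apply,
          norm_star, le_refl])
  have hug : inner ℂ hu.toLp hg.toLp = fourierCoeff (fun t => f t * g t) n := by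
    rw [L2.inner_def]
    refine integral_congr_ae ?_
    filter_upwards [hu.coeFn_toLp, hg.coeFn_toLp] with t htu htg
    rw [htu, htg]
    simp only [RCLike.inner_apply, map_mul, Complex.conj_conj, fourier_neg, smul_eq_mul]
    ring
  have hue (k : ℤ) : inner ℂ hu.toLp (fourierBasis k) = fourierCoeff f (n - k) := by
    rw [L2.inner_def, coe_fourierBasis]
    refine integral_congr_ae ?_
    filter_upwards [hu.coeFn_toLp, coeFn_fourierLp 2 k] with t htu hte
    rw [htu, hte]
    simp only [RCLike.inner_apply, map_mul, Complex.conj_conj, neg_sub, sub_eq_add_neg k n,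
      fourier_add, fourier_neg, smul_eq_mul]
    ring
  have heg (k : ℤ) : inner ℂ (fourierBasis k) hg.toLp = fourierCoeff g k := by
    rw [← fourierBasis.repr_apply_apply, fourierBasis_repr, fourierCoeff_congr_ae hg.coeFn_toLp]
  simpa only [hug, hue, heg] using fourierBasis.hasSum_inner_mul_inner hu.toLp hg.toLp

theorem hasSum_fourierCoeffOn_mul {a b : ℝ} (hab : a < b) {f g : ℝ → ℂ}
    (hf : MemLp f 2 (volume.restrict (Set.Ioc a b)))
    (hg : MemLp g 2 (volume.restrict (Set.Ioc a b))) (n : ℤ) :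
    HasSum (fun k => fourierCoeffOn hab f (n - k) * fourierCoeffOn hab g k)
      (fourierCoeffOn hab (fun s => f s * g s) n) := by
  have := Fact.mk (sub_pos.2 hab)
  rw [← add_sub_cancel a b] at hf hg
  exact hasSum_fourierCoeff_mul hf.memLp_liftIoc.haarAddCircle hg.memLp_liftIoc.haarAddCircle n

end Convolution

/-- A continuously differentiable closed curve parametrised by `ℝ / 2πℤ`, with derivative `Y'`. -/
structure IsC1Loop {E : Type*} [NormedAddCommGroup E] [NormedSpace ℝ E] (Y Y' : ℝ → E) : Prop where
  periodic : Function.Periodic Y (2 * π)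
  hasDerivAt : ∀ s, HasDerivAt Y (Y' s) s
  continuous_deriv : Continuous Y'

theorem IsC1Loop.continuous {E : Type*} [NormedAddCommGroup E] [NormedSpace ℝ E] {Y Y' : ℝ → E}
    (h : IsC1Loop Y Y') : Continuous Y :=
  continuous_iff_continuousAt.2 fun s => (h.hasDerivAt s).continuousAt

theorem IsC1Loop.periodic_deriv {E : Type*} [NormedAddCommGroup E] [NormedSpace ℝ E]
    {Y Y' : ℝ → E} (h : IsC1Loop Y Y') : Function.Periodic Y' (2 * π) := fun s =>
  (h.hasDerivAt (s + 2 * π)).comp_add_const s (2 * π) |>.unique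
    (by simpa only [h.periodic _] using h.hasDerivAt s)

theorem IsC1Loop.sub {E : Type*} [NormedAddCommGroup E] [NormedSpace ℝ E]
    {Y Y' Z Z' : ℝ → E} (hY : IsC1Loop Y Y') (hZ : IsC1Loop Z Z') :
    IsC1Loop (Y - Z) (Y' - Z') where
  periodic := hY.periodic.sub hZ.periodic
  hasDerivAt s := (hY.hasDerivAt s).sub (hZ.hasDerivAt s)
  continuous_deriv := hY.continuous_deriv.sub hZ.continuous_deriv

/-- Lebesgue measure on the period `(-π, π]`. -/
abbrev periodMeasure : Measure ℝ := volume.restrict (Set.Ioc (-π) π)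

/-- The normalised Fourier coefficient `(2π)⁻¹ ∫_{-π}^{π} f(s) e^{-iks} ds`; it is `1 / (2π)` times
the coefficient `f̂_k` of the informal statement. -/
abbrev circleCoeff (f : ℝ → ℂ) (k : ℤ) : ℂ := fourierCoeffOn (neg_lt_self pi_pos) f k

theorem circleCoeff_eq_integral (f : ℝ → ℂ) (k : ℤ) :
    circleCoeff f k =
      (2 * π : ℂ)⁻¹ * ∫ s in (-π)..π, f s * Complex.exp (-Complex.I * (k : ℂ) * (s : ℂ)) := by
  rw [circleCoeff, fourierCoeffOn_eq_integral, Complex.real_smul]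
  congr 1
  · push_cast; ring
  · refine intervalIntegral.integral_congr fun s _ => ?_
    have hπ : (π : ℂ) ≠ 0 := mod_cast pi_ne_zero
    simp only [fourier_coe_apply, smul_eq_mul]
    rw [mul_comm]
    congr 2
    push_cast
    field

theorem circleCoeff_sub {f g : ℝ → ℂ} (hf : Continuous f) (hg : Continuous g) (k : ℤ) :
    circleCoeff (fun s => f s - g s) k = circleCoeff f k - circleCoeff g k := by
  simp only [circleCoeff_eq_integral, sub_mul]
  rw [intervalIntegral.integral_sub, mul_sub]
  all_goals exact Continuous.intervalIntegrable (by fun_prop) _ _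

theorem circleCoeff_comp_add {f : ℝ → ℂ} (hf : Function.Periodic f (2 * π)) (τ : ℝ) (k : ℤ) :
    circleCoeff (fun s => f (s + τ)) k = Complex.exp (Complex.I * k * τ) * circleCoeff f k := by
  set e : ℝ → ℂ := fun s => Complex.exp (-Complex.I * k * s) with he
  have he_per : Function.Periodic e (2 * π) := fun s => by
    refine Complex.exp_eq_exp_iff_exists_int.2 ⟨-k, ?_⟩
    push_cast; ring
  have he_add (s : ℝ) : e s = Complex.exp (Complex.I * k * τ) * e (s + τ) := by
    simp only [he, ← Complex.exp_add]
    push_cast; ring_nf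
  have hshift := intervalIntegral.integral_comp_add_right (a := -π) (b := π)
    (fun s => f s * e s) τ
  have hper : ∫ s in (-π + τ)..(π + τ), f s * e s = ∫ s in (-π)..π, f s * e s := by
    have h := (hf.mul he_per).intervalIntegral_add_eq (-π + τ) (-π)
    rwa [show -π + τ + 2 * π = π + τ by ring, show -π + 2 * π = π by ring] at h
  have htwist : ∫ s in (-π)..π, f (s + τ) * e s =
      Complex.exp (Complex.I * k * τ) * ∫ s in (-π)..π, f (s + τ) * e (s + τ) := by
    rw [← intervalIntegral.integral_const_mul]
    refine intervalIntegral.integral_congr fun s _ => ?_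
    rw [he_add s]
    ring
  rw [circleCoeff_eq_integral, htwist, hshift, hper, circleCoeff_eq_integral, mul_left_comm]

theorem circleCoeff_deriv {f f' : ℝ → ℂ} (h : IsC1Loop f f') (k : ℤ) :
    circleCoeff f' k = Complex.I * k * circleCoeff f k := by
  have hends : f π = f (-π) := by
    rw [← h.periodic (-π)]; ring_nf
  rcases eq_or_ne k 0 with rfl | hk
  · rw [circleCoeff_eq_integral]
    simp [intervalIntegral.integral_eq_sub_of_hasDerivAt (fun s _ => h.hasDerivAt s)
      (h.continuous_deriv.intervalIntegrable _ _), hends]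
  · have hπ : (π : ℂ) ≠ 0 := mod_cast pi_ne_zero
    have hk' : (k : ℂ) ≠ 0 := mod_cast hk
    rw [circleCoeff, circleCoeff, fourierCoeffOn_of_hasDerivAt (neg_lt_self pi_pos) hk
      (fun s _ => h.hasDerivAt s) (h.continuous_deriv.intervalIntegrable _ _), hends]
    push_cast
    field_simp
    ring

theorem eLpNorm_two_sq_eq_tsum_circleCoeff {f : ℝ → ℂ} (hf : MemLp f 2 periodMeasure) :
    eLpNorm f 2 periodMeasure ^ 2 = ENNReal.ofReal (2 * π) * ∑' k, ‖circleCoeff f k‖ₑ ^ 2 := by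
  have hsum := hasSum_sq_fourierCoeffOn (neg_lt_self pi_pos) hf
  have hint : ∫ s in (-π)..π, ‖f s‖ ^ 2 = 2 * π * ∑' k, ‖circleCoeff f k‖ ^ 2 := by
    rw [hsum.tsum_eq, smul_eq_mul, sub_neg_eq_add, ← two_mul, mul_inv_cancel_left₀ two_pi_pos.ne']
  calc eLpNorm f 2 periodMeasure ^ 2 = ENNReal.ofReal (∫ s in (-π)..π, ‖f s‖ ^ 2) := by
        rw [eLpNorm_two_sq, intervalIntegral.integral_of_le (neg_lt_self pi_pos).le,
          ofReal_integral_eq_lintegral_ofReal hf.integrable_norm_pow'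
            (.of_forall fun s => by positivity)]
        simp [ENNReal.ofReal_pow]
    _ = _ := by
        rw [hint, ENNReal.ofReal_mul two_pi_pos.le,
          ENNReal.ofReal_tsum_of_nonneg (fun _ => by positivity) hsum.summable]
        simp [ENNReal.ofReal_pow]


section Young

variable {G : Type*} [AddGroup G] [Countable G] [MeasurableSpace G] [DiscreteMeasurableSpace G]

theorem eLpNorm_two_tsum_mul_sub_le (a b : G → ℝ≥0∞) :
    eLpNorm (fun n => ∑' k, a k * b (n - k)) 2 Measure.count ≤
      (∑' k, a k) * eLpNorm b 2 Measure.count := by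
  have htranslate (k : G) :
      eLpNorm (fun n => a k * b (n - k)) 2 Measure.count ≤ a k * eLpNorm b 2 Measure.count := by
    rw [← ENNReal.pow_le_pow_left_iff two_ne_zero, mul_pow]
    simp only [eLpNorm_two_sq, lintegral_count, enorm_eq_self, mul_pow]
    rw [ENNReal.tsum_mul_left, ← (Equiv.subRight k).tsum_eq fun n => b n ^ 2]
    rfl
  calc eLpNorm (fun n => ∑' k, a k * b (n - k)) 2 Measure.count
      ≤ ∑' k, eLpNorm (fun n => a k * b (n - k)) 2 Measure.count := by
        simpa only [lintegral_count] using eLpNorm_two_lintegral_le (μ := .count) (ν := .count)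
          (G := fun n k => a k * b (n - k)) (Measurable.of_discrete)
    _ ≤ (∑' k, a k) * eLpNorm b 2 Measure.count := by
        rw [← ENNReal.tsum_mul_right]
        exact ENNReal.tsum_le_tsum htranslate

theorem eLpNorm_two_tsum_mul_mul_sub_le (w u v : G → ℝ≥0∞) :
    eLpNorm (fun n => ∑' k, w k * u k * v (n - k)) 2 Measure.count ≤
      eLpNorm w 2 Measure.count * (eLpNorm u 2 Measure.count * eLpNorm v 2 Measure.count) := by
  refine (eLpNorm_two_tsum_mul_sub_le _ v).trans ?_
  rw [← mul_assoc]
  gcongr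
  simpa only [lintegral_count] using lintegral_mul_le_eLpNorm_two_mul_eLpNorm_two
    (μ := Measure.count) (f := w) (g := u) Measurable.of_discrete.aemeasurable
    Measurable.of_discrete.aemeasurable

end Young

/-- The weight `|k| ^ σ` on the nonzero frequencies, extended by `0` to `k = 0`. -/
def intWeight (σ : ℝ) (k : ℤ) : ℝ≥0∞ := if k = 0 then 0 else ‖(k : ℝ)‖ₑ ^ σ

theorem intWeight_of_ne_zero (σ : ℝ) {k : ℤ} (hk : k ≠ 0) : intWeight σ k = ‖(k : ℝ)‖ₑ ^ σ :=
  if_neg hk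

theorem one_le_enorm_intCast {k : ℤ} (hk : k ≠ 0) : 1 ≤ ‖(k : ℝ)‖ₑ := by
  rw [← ofReal_norm, ENNReal.one_le_ofReal, Real.norm_eq_abs]
  exact mod_cast Int.one_le_abs hk

theorem intWeight_add (σ ρ : ℝ) (k : ℤ) :
    intWeight (σ + ρ) k = intWeight σ k * intWeight ρ k := by
  rcases eq_or_ne k 0 with rfl | hk
  · simp [intWeight]
  · simp only [intWeight_of_ne_zero _ hk]
    exact ENNReal.rpow_add _ _ (zero_lt_one.trans_le (one_le_enorm_intCast hk)).ne' enorm_ne_top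

theorem intWeight_mono {σ ρ : ℝ} (h : σ ≤ ρ) (k : ℤ) : intWeight σ k ≤ intWeight ρ k := by
  rcases eq_or_ne k 0 with rfl | hk
  · simp [intWeight]
  · simpa only [intWeight_of_ne_zero _ hk] using
      ENNReal.rpow_le_rpow_of_exponent_le (one_le_enorm_intCast hk) h

theorem intWeight_neg_mul_le {γ δ : ℝ} (hγ : 0 ≤ γ) (hδ : 0 ≤ δ) {i j : ℤ} (hi : i ≠ 0)
    (hj : j ≠ 0) : intWeight (-γ) i * intWeight (-δ) j ≤
      intWeight (-(γ + δ)) i + intWeight (-(γ + δ)) j := by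
  have hanti {ρ : ℝ} (hρ : 0 ≤ ρ) {x y : ℝ≥0∞} (h : x ≤ y) : y ^ (-ρ) ≤ x ^ (-ρ) := by
    simpa only [ENNReal.rpow_neg] using ENNReal.inv_le_inv.2 (ENNReal.rpow_le_rpow h hρ)
  rw [neg_add, intWeight_add, intWeight_add]
  simp only [intWeight_of_ne_zero _ hi, intWeight_of_ne_zero _ hj]
  rcases le_total ‖(i : ℝ)‖ₑ ‖(j : ℝ)‖ₑ with h | h
  · exact le_add_right (mul_le_mul_right (hanti hδ h) _)
  · exact le_add_left (mul_le_mul_left (hanti hγ h) _)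

theorem eLpNorm_intWeight_neg_ne_top {s : ℝ} (hs : 1 / 2 < s) :
    eLpNorm (intWeight (-s)) 2 Measure.count ≠ ⊤ := by
  have hle (k : ℤ) : intWeight (-s) k ^ 2 ≤ ENNReal.ofReal (|(k : ℝ)| ^ (-(2 * s))) := by
    rcases eq_or_ne k 0 with rfl | hk
    · simp [intWeight]
    · rw [intWeight_of_ne_zero _ hk, ← ENNReal.ofReal_rpow_of_pos (by positivity),
        ← Real.norm_eq_abs, ofReal_norm, ← ENNReal.rpow_mul_natCast]
      refine le_of_eq ?_
      congr 1
      push_cast; ring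
  have hsum : Summable fun k : ℤ => |(k : ℝ)| ^ (-(2 * s)) :=
    Real.summable_abs_int_rpow (by linarith)
  refine fun htop => (hsum.tsum_ofReal_ne_top.lt_top.trans_le' ?_).ne
    (by rw [htop, ENNReal.top_pow two_ne_zero] : eLpNorm (intWeight (-s)) 2 .count ^ 2 = ⊤)
  rw [eLpNorm_two_sq, lintegral_count]
  exact ENNReal.tsum_le_tsum hle

/-- The homogeneous Sobolev seminorm `Ḣ^σ(𝕋)`, with values in `[0, ∞]` and normalised so that
`σ = 0` gives the `L²` norm on functions of mean zero. -/
def sobolevSeminorm (σ : ℝ) (f : ℝ → ℂ) : ℝ≥0∞ :=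
  ENNReal.ofReal √(2 * π) * eLpNorm (fun k => intWeight σ k * ‖circleCoeff f k‖ₑ) 2 Measure.count

theorem sobolevSeminorm_le_mul {f g : ℝ → ℂ} {ρ : ℝ} (c : ℝ≥0∞) (σ : ℝ)
    (h : ∀ k : ℤ, k ≠ 0 → ‖circleCoeff f k‖ₑ ≤ c * intWeight ρ k * ‖circleCoeff g k‖ₑ) :
    sobolevSeminorm σ f ≤ c * sobolevSeminorm (σ + ρ) g := by
  rw [sobolevSeminorm, sobolevSeminorm, mul_left_comm]
  gcongr
  refine eLpNorm_le_mul_eLpNorm_of_ae_le_mul'' 2 Measurable.of_discrete.aestronglyMeasurable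
    (.of_forall fun k => ?_)
  rcases eq_or_ne k 0 with rfl | hk
  · simp [intWeight]
  · simp only [enorm_eq_self, intWeight_add]
    calc intWeight σ k * ‖circleCoeff f k‖ₑ
        ≤ intWeight σ k * (c * intWeight ρ k * ‖circleCoeff g k‖ₑ) := by gcongr; exact h k hk
      _ = _ := by ring

theorem sobolevSeminorm_mono {σ ρ : ℝ} (h : σ ≤ ρ) (f : ℝ → ℂ) :
    sobolevSeminorm σ f ≤ sobolevSeminorm ρ f := by
  unfold sobolevSeminorm
  gcongr
  refine eLpNorm_mono_enorm fun k => ?_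
  simp only [enorm_eq_self]
  gcongr
  exact intWeight_mono h k

theorem eLpNorm_two_eq_eLpNorm_circleCoeff {f : ℝ → ℂ} (hf : MemLp f 2 periodMeasure) :
    eLpNorm f 2 periodMeasure =
      ENNReal.ofReal √(2 * π) * eLpNorm (circleCoeff f) 2 Measure.count := by
  refine (ENNReal.pow_right_strictMono two_ne_zero).injective ?_
  rw [mul_pow, ← ENNReal.ofReal_pow (by positivity), Real.sq_sqrt (by positivity),
    eLpNorm_two_sq_eq_tsum_circleCoeff hf, eLpNorm_two_sq, lintegral_count]

theorem eLpNorm_two_le_sobolevSeminorm {f : ℝ → ℂ} (hf : MemLp f 2 periodMeasure)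
    (hf₀ : circleCoeff f 0 = 0) {σ : ℝ} (hσ : 0 ≤ σ) :
    eLpNorm f 2 periodMeasure ≤ sobolevSeminorm σ f := by
  refine le_trans ?_ (sobolevSeminorm_mono hσ f)
  rw [eLpNorm_two_eq_eLpNorm_circleCoeff hf, sobolevSeminorm]
  gcongr
  refine eLpNorm_mono_enorm fun k => ?_
  rcases eq_or_ne k 0 with rfl | hk
  · simp [hf₀]
  · simp [intWeight_of_ne_zero _ hk]

/-! ### Products of mean-zero functions -/

/-- The constant `2 (∑_{k ≠ 0} |k| ^ (-2s)) ^ (1/2)` of the product estimate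
`‖f g‖_{L²} ≤ C ‖f‖_{Ḣ^γ} ‖g‖_{Ḣ^δ}`, where `s = γ + δ`. -/
def productConst (s : ℝ) : ℝ≥0∞ := 2 * eLpNorm (intWeight (-s)) 2 Measure.count

theorem productConst_ne_top {s : ℝ} (hs : 1 / 2 < s) : productConst s ≠ ⊤ :=
  ENNReal.mul_ne_top ENNReal.ofNat_ne_top (eLpNorm_intWeight_neg_ne_top hs)

theorem mul_le_intWeight_mul {a b : ℤ → ℝ≥0∞} (ha₀ : a 0 = 0) (hb₀ : b 0 = 0) {γ δ : ℝ}
    (hγ : 0 ≤ γ) (hδ : 0 ≤ δ) (j k : ℤ) :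
    a j * b k ≤ intWeight (-(γ + δ)) j * (intWeight γ j * a j) * (intWeight δ k * b k) +
      intWeight (-(γ + δ)) k * (intWeight δ k * b k) * (intWeight γ j * a j) := by
  have hunweight (ρ : ℝ) {k : ℤ} (hk : k ≠ 0) (x : ℝ≥0∞) :
      x = intWeight (-ρ) k * (intWeight ρ k * x) := by
    rw [← mul_assoc, ← intWeight_add, neg_add_cancel, intWeight_of_ne_zero _ hk]
    simp
  rcases eq_or_ne j 0 with rfl | hj
  · simp [ha₀]
  rcases eq_or_ne k 0 with rfl | hk
  · simp [hb₀]
  set A := intWeight γ j * a j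
  set B := intWeight δ k * b k
  calc a j * b k = intWeight (-γ) j * intWeight (-δ) k * (A * B) := by
        rw [hunweight γ hj (a j), hunweight δ hk (b k)]
        ring
    _ ≤ (intWeight (-(γ + δ)) j + intWeight (-(γ + δ)) k) * (A * B) := by
        gcongr
        exact intWeight_neg_mul_le hγ hδ hj hk
    _ = _ := by ring

theorem eLpNorm_two_tsum_sub_mul_le_weighted {a b : ℤ → ℝ≥0∞} (ha₀ : a 0 = 0) (hb₀ : b 0 = 0)
    {γ δ : ℝ} (hγ : 0 ≤ γ) (hδ : 0 ≤ δ) :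
    eLpNorm (fun n => ∑' k, a (n - k) * b k) 2 Measure.count ≤ productConst (γ + δ) *
      (eLpNorm (fun k => intWeight γ k * a k) 2 Measure.count *
        eLpNorm (fun k => intWeight δ k * b k) 2 Measure.count) := by
  set w : ℤ → ℝ≥0∞ := intWeight (-(γ + δ))
  set A : ℤ → ℝ≥0∞ := fun k => intWeight γ k * a k
  set B : ℤ → ℝ≥0∞ := fun k => intWeight δ k * b k
  have hflip (n : ℤ) :
      ∑' k, w (n - k) * A (n - k) * B k = ∑' k, w k * A k * B (n - k) := by
    rw [← (Equiv.subLeft n).tsum_eq]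
    simp
  calc eLpNorm (fun n => ∑' k, a (n - k) * b k) 2 Measure.count
      ≤ eLpNorm ((fun n => ∑' k, w k * A k * B (n - k)) +
          fun n => ∑' k, w k * B k * A (n - k)) 2 Measure.count := by
        refine eLpNorm_mono_enorm fun n => ?_
        simp only [enorm_eq_self, Pi.add_apply]
        rw [← hflip, ← ENNReal.tsum_add]
        exact ENNReal.tsum_le_tsum fun k => mul_le_intWeight_mul ha₀ hb₀ hγ hδ (n - k) k
    _ ≤ _ := eLpNorm_add_le Measurable.of_discrete.aestronglyMeasurable
        Measurable.of_discrete.aestronglyMeasurable one_le_two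
    _ ≤ _ := add_le_add (eLpNorm_two_tsum_mul_mul_sub_le w A B)
        (eLpNorm_two_tsum_mul_mul_sub_le w B A)
    _ = productConst (γ + δ) *
          (eLpNorm A 2 Measure.count * eLpNorm B 2 Measure.count) := by
        rw [productConst]
        ring

theorem eLpNorm_mul_le_sobolevSeminorm_mul {f g : ℝ → ℂ} (hf : MemLp f 2 periodMeasure)
    (hg : MemLp g 2 periodMeasure) (hfg : MemLp (fun s => f s * g s) 2 periodMeasure)
    (hf₀ : circleCoeff f 0 = 0) (hg₀ : circleCoeff g 0 = 0) {γ δ : ℝ} (hγ : 0 ≤ γ)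
    (hδ : 0 ≤ δ) :
    eLpNorm (fun s => f s * g s) 2 periodMeasure ≤
      productConst (γ + δ) * (sobolevSeminorm γ f * sobolevSeminorm δ g) := by
  have hconv (n : ℤ) : ‖circleCoeff (fun s => f s * g s) n‖ₑ ≤
      ∑' k, ‖circleCoeff f (n - k)‖ₑ * ‖circleCoeff g k‖ₑ := by
    have h := hasSum_fourierCoeffOn_mul (neg_lt_self pi_pos) hf hg n
    simpa only [enorm_mul, h.tsum_eq] using enorm_tsum_le_tsum_enorm
      (f := fun k => circleCoeff f (n - k) * circleCoeff g k)
  set c := ENNReal.ofReal √(2 * π) with hc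
  have hc1 : 1 ≤ c := by
    rw [hc, ENNReal.one_le_ofReal, Real.one_le_sqrt]
    linarith [pi_gt_three]
  calc eLpNorm (fun s => f s * g s) 2 periodMeasure
      = c * eLpNorm (circleCoeff fun s => f s * g s) 2 Measure.count :=
        eLpNorm_two_eq_eLpNorm_circleCoeff hfg
    _ ≤ c * (productConst (γ + δ) *
          (eLpNorm (fun k => intWeight γ k * ‖circleCoeff f k‖ₑ) 2 Measure.count *
            eLpNorm (fun k => intWeight δ k * ‖circleCoeff g k‖ₑ) 2 Measure.count)) := by
        gcongr
        exact (eLpNorm_mono_enorm hconv).trans (eLpNorm_two_tsum_sub_mul_le_weighted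
          (by simp [hf₀]) (by simp [hg₀]) hγ hδ)
    _ ≤ c * c * (productConst (γ + δ) * _) := by gcongr; exact le_mul_of_one_le_left' hc1
    _ = _ := by
        rw [sobolevSeminorm, sobolevSeminorm]
        ring

/-! ### Secants and their derivatives -/

section Secant

variable {E : Type*} [AddCommGroup E] [Module ℝ E]

/-- The secant slope `(Y (s + τ) - Y s) / τ`, written `L(s, τ)` in the contour dynamic equation. -/
def secant (Y : ℝ → E) (s τ : ℝ) : E := τ⁻¹ • (Y (s + τ) - Y s)

/-- The `τ`-derivative of `secant Y s τ` at `τ ≠ 0`, when `Y'` is the derivative of `Y`. -/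
def secantDeriv (Y Y' : ℝ → E) (s τ : ℝ) : E := τ⁻¹ • (Y' (s + τ) - secant Y s τ)

end Secant

theorem enorm_complexOfReal (x : ℝ) : ‖(x : ℂ)‖ₑ = ‖x‖ₑ := by
  rw [enorm_eq_nnnorm, Complex.nnnorm_real, enorm_eq_nnnorm]

theorem norm_exp_I_mul_sub_one_sub_le (x : ℝ) :
    ‖Complex.exp (Complex.I * x) - 1 - Complex.I * x‖ ≤ 2 * |x| ^ 2 := by
  rcases le_total |x| 1 with hx | hx
  · have h := Complex.norm_exp_sub_one_sub_id_le (x := Complex.I * x) (by simpa using hx)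
    rw [norm_mul, Complex.norm_I, one_mul, Complex.norm_real, Real.norm_eq_abs] at h
    linarith [sq_nonneg |x|]
  · calc ‖Complex.exp (Complex.I * x) - 1 - Complex.I * x‖
        ≤ ‖Complex.exp (Complex.I * x) - 1‖ + ‖Complex.I * (x : ℂ)‖ := norm_sub_le _ _
      _ ≤ |x| + |x| := by
          gcongr
          · exact norm_exp_I_mul_ofReal_sub_one_le
          · simp
      _ ≤ 2 * |x| ^ 2 := by nlinarith

theorem enorm_exp_I_mul_sub_one_le_rpow {ε : ℝ} (hε₀ : 0 ≤ ε) (hε₁ : ε ≤ 1) (x : ℝ) :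
    ‖Complex.exp (Complex.I * x) - 1‖ₑ ≤ 2 ^ (1 - ε) * ‖x‖ₑ ^ ε := by
  set z := Complex.exp (Complex.I * x) - 1
  have hz : ‖z‖ₑ ≤ 2 := by
    refine (enorm_sub_le).trans ?_
    rw [Complex.enorm_exp_I_mul_ofReal, enorm_one, one_add_one_eq_two]
  calc ‖z‖ₑ = ‖z‖ₑ ^ (1 - ε) * ‖z‖ₑ ^ ε := by
        rw [← ENNReal.rpow_add_of_nonneg _ _ (by linarith) hε₀]
        simp
    _ ≤ 2 ^ (1 - ε) * ‖x‖ₑ ^ ε := mul_le_mul' (ENNReal.rpow_le_rpow hz (by linarith))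
        (ENNReal.rpow_le_rpow enorm_exp_I_mul_ofReal_sub_one_le hε₀)

theorem circleCoeff_const_mul (f : ℝ → ℂ) (c : ℂ) (k : ℤ) :
    circleCoeff (fun s => c * f s) k = c * circleCoeff f k :=
  fourierCoeffOn.const_mul _ _ _ _

theorem circleCoeff_secant {f : ℝ → ℂ} (hf : Function.Periodic f (2 * π)) (hc : Continuous f)
    (τ : ℝ) (k : ℤ) : circleCoeff (fun s => secant f s τ) k =
      (τ : ℂ)⁻¹ * ((Complex.exp (Complex.I * ↑(k * τ)) - 1) * circleCoeff f k) := by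
  simp only [secant, Complex.real_smul]
  rw [circleCoeff_const_mul, circleCoeff_sub (by fun_prop) hc, circleCoeff_comp_add hf]
  push_cast
  ring_nf

theorem circleCoeff_secantDeriv {f f' : ℝ → ℂ} (h : IsC1Loop f f') {τ : ℝ} (hτ : τ ≠ 0) (k : ℤ) :
    circleCoeff (fun s => secantDeriv f f' s τ) k = (τ : ℂ)⁻¹ ^ 2 *
      (Complex.exp (Complex.I * ↑(k * τ)) *
        (Complex.exp (Complex.I * ↑(-(k * τ))) - 1 - Complex.I * ↑(-(k * τ)))) *
          circleCoeff f k := by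
  have hc := h.continuous
  have hf' := h.continuous_deriv
  have hsec : Continuous fun s => secant f s τ := by unfold secant; fun_prop
  have hτ' : (τ : ℂ) ≠ 0 := mod_cast hτ
  have hexp : Complex.exp (Complex.I * ↑(k * τ)) * Complex.exp (Complex.I * ↑(-(k * τ))) = 1 := by
    rw [← Complex.exp_add]
    simp
  simp only [secantDeriv, Complex.real_smul]
  rw [circleCoeff_const_mul, circleCoeff_sub (by fun_prop) hsec,
    circleCoeff_comp_add h.periodic_deriv, circleCoeff_deriv h, circleCoeff_secant h.periodic hc]
  calc _ = (τ : ℂ)⁻¹ ^ 2 * (1 - Complex.exp (Complex.I * ↑(k * τ)) *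
          (1 - Complex.I * ↑(k * τ))) * circleCoeff f k := by
        push_cast
        field_simp
        ring
    _ = _ := by
        rw [← hexp, Complex.ofReal_neg]
        ring

theorem sobolevSeminorm_deriv_le {f f' : ℝ → ℂ} (h : IsC1Loop f f') (σ : ℝ) :
    sobolevSeminorm σ f' ≤ sobolevSeminorm (σ + 1) f := by
  simpa using sobolevSeminorm_le_mul (f := f') (g := f) 1 σ fun k hk => by
    rw [circleCoeff_deriv h, intWeight_of_ne_zero _ hk]
    simp [enorm_mul, enorm_eq_nnnorm Complex.I, ← Complex.ofReal_intCast, enorm_complexOfReal]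

theorem sobolevSeminorm_comp_add {f : ℝ → ℂ} (hf : Function.Periodic f (2 * π)) (σ τ : ℝ) :
    sobolevSeminorm σ (fun s => f (s + τ)) = sobolevSeminorm σ f := by
  simp only [sobolevSeminorm, circleCoeff_comp_add hf, enorm_mul]
  simp [mul_assoc, ← Complex.ofReal_intCast, ← Complex.ofReal_mul, Complex.enorm_exp_I_mul_ofReal]

theorem sobolevSeminorm_secant_le {f : ℝ → ℂ} (hf : Function.Periodic f (2 * π))
    (hc : Continuous f) {ε : ℝ} (hε₀ : 0 ≤ ε) (hε₁ : ε ≤ 1) (σ : ℝ) {τ : ℝ} (hτ : τ ≠ 0) :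
    sobolevSeminorm σ (fun s => secant f s τ) ≤
      2 ^ (1 - ε) * ‖τ‖ₑ ^ (ε - 1) * sobolevSeminorm (σ + ε) f := by
  refine sobolevSeminorm_le_mul _ σ fun k hk => ?_
  rw [circleCoeff_secant hf hc, enorm_mul, enorm_mul, intWeight_of_ne_zero _ hk]
  have hinv : ‖(τ : ℂ)⁻¹‖ₑ * ‖τ‖ₑ ^ ε = ‖τ‖ₑ ^ (ε - 1) := by
    rw [← Complex.ofReal_inv, enorm_complexOfReal, enorm_inv hτ, mul_comm, ← div_eq_mul_inv]
    simpa using (ENNReal.rpow_sub ε 1 (enorm_ne_zero.2 hτ) enorm_ne_top).symm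
  calc ‖(τ : ℂ)⁻¹‖ₑ * (‖Complex.exp (Complex.I * ↑(k * τ)) - 1‖ₑ * ‖circleCoeff f k‖ₑ)
      ≤ ‖(τ : ℂ)⁻¹‖ₑ * (2 ^ (1 - ε) * ‖k * τ‖ₑ ^ ε * ‖circleCoeff f k‖ₑ) := by
        gcongr
        exact enorm_exp_I_mul_sub_one_le_rpow hε₀ hε₁ _
    _ = 2 ^ (1 - ε) * (‖(τ : ℂ)⁻¹‖ₑ * ‖τ‖ₑ ^ ε) * ‖(k : ℝ)‖ₑ ^ ε * ‖circleCoeff f k‖ₑ := by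
        rw [enorm_mul, ENNReal.mul_rpow_of_nonneg _ _ hε₀]
        ring
    _ = _ := by rw [hinv]

theorem sobolevSeminorm_secantDeriv_le {f f' : ℝ → ℂ} (h : IsC1Loop f f') (σ : ℝ) {τ : ℝ}
    (hτ : τ ≠ 0) :
    sobolevSeminorm σ (fun s => secantDeriv f f' s τ) ≤ 2 * sobolevSeminorm (σ + 2) f := by
  refine sobolevSeminorm_le_mul _ σ fun k hk => ?_
  have hbound : ‖Complex.exp (Complex.I * ↑(-(k * τ))) - 1 - Complex.I * ↑(-(k * τ))‖ₑ ≤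
      2 * (‖(k : ℝ)‖ₑ ^ 2 * ‖τ‖ₑ ^ 2) := by
    have hle := ENNReal.ofReal_le_ofReal (norm_exp_I_mul_sub_one_sub_le (-(k * τ)))
    rwa [ofReal_norm, ENNReal.ofReal_mul zero_le_two, ENNReal.ofReal_pow (abs_nonneg _),
      abs_neg, ← Real.norm_eq_abs, ofReal_norm, enorm_mul, mul_pow, ENNReal.ofReal_ofNat] at hle
  have hcancel : ‖(τ : ℂ)⁻¹ ^ 2‖ₑ * ‖τ‖ₑ ^ 2 = 1 := by
    rw [enorm_pow, ← Complex.ofReal_inv, enorm_complexOfReal, enorm_inv hτ, ← mul_pow,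
      ENNReal.inv_mul_cancel (by simpa using hτ) enorm_ne_top, one_pow]
  rw [circleCoeff_secantDeriv h hτ, enorm_mul, enorm_mul, enorm_mul,
    Complex.enorm_exp_I_mul_ofReal, one_mul, intWeight_of_ne_zero _ hk, ENNReal.rpow_two]
  refine mul_le_mul_left ?_ _
  calc _ ≤ ‖(τ : ℂ)⁻¹ ^ 2‖ₑ * (2 * (‖(k : ℝ)‖ₑ ^ 2 * ‖τ‖ₑ ^ 2)) := mul_le_mul_right hbound _
    _ = 2 * ‖(k : ℝ)‖ₑ ^ 2 * (‖(τ : ℂ)⁻¹ ^ 2‖ₑ * ‖τ‖ₑ ^ 2) := by ring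
    _ = _ := by rw [hcancel, mul_one]

/-! ### Well-stretched curves -/

theorem eLpNorm_two_restrict_Ioc_of_periodic {E : Type*} [NormedAddCommGroup E] {f : ℝ → E}
    {T : ℝ} (hf : Function.Periodic f T) (hT : 0 < T) (a b : ℝ) :
    eLpNorm f 2 (volume.restrict (Set.Ioc a (a + T))) =
      eLpNorm f 2 (volume.restrict (Set.Ioc b (b + T))) := by
  refine (ENNReal.pow_right_strictMono two_ne_zero).injective ?_
  simp only [eLpNorm_two_sq]
  refine (isAddFundamentalDomain_Ioc hT a).setLIntegral_eq (isAddFundamentalDomain_Ioc hT b) _ ?_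
  rintro ⟨g, n, rfl⟩ x
  have hfn : f (n • T + x) = f x := by rw [add_comm, hf.zsmul n x]
  exact congrArg (‖·‖ₑ ^ 2) hfn

section Curve

variable {E : Type*} [NormedAddCommGroup E] [NormedSpace ℝ E] {Y Y' Y'' : ℝ → E} {K l s τ : ℝ}

/-- A `1/2`-Hölder bound with constant `K`, imposed at distances at most `π` only. -/
def HalfHolder (f : ℝ → E) (K : ℝ) : Prop :=
  ∀ a b, |a - b| ≤ π → ‖f a - f b‖ ≤ K * √|a - b|

/-- The well-stretched condition with constant `l`. -/
def WellStretched (Y : ℝ → E) (l : ℝ) : Prop :=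
  ∀ a b, |a - b| ≤ π → l * |a - b| ≤ ‖Y a - Y b‖

/-- The quantitative hypotheses on a curve under which the contour integral is estimated: it is
well-stretched with constant `l`, and its derivative is `1/2`-Hölder with constant `K`. -/
structure IsStretchedLoop (Y Y' : ℝ → E) (l K : ℝ) : Prop extends IsC1Loop Y Y' where
  pos : 0 < l
  wellStretched : WellStretched Y l
  halfHolder : HalfHolder Y' K

theorem IsC1Loop.halfHolder [CompleteSpace E] (h : IsC1Loop Y Y') (hK : 0 ≤ K)
    (hY' : eLpNorm Y' 2 periodMeasure ≤ ENNReal.ofReal K) : HalfHolder Y K := by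
  have hordered (a b : ℝ) (hab : a ≤ b) (hb : b ≤ a + 2 * π) : ‖Y b - Y a‖ ≤ K * √(b - a) := by
    have hmono : eLpNorm Y' 2 (volume.restrict (Set.Ioc a b)) ≤ ENNReal.ofReal K := by
      refine le_trans ?_ hY'
      rw [periodMeasure, show Set.Ioc (-π) π = Set.Ioc (-π) (-π + 2 * π) by ring_nf,
        ← eLpNorm_two_restrict_Ioc_of_periodic h.periodic_deriv two_pi_pos a (-π)]
      exact eLpNorm_mono_measure _ (Measure.restrict_mono (Set.Ioc_subset_Ioc_right hb) le_rfl)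
    rw [← ENNReal.ofReal_le_ofReal_iff (by positivity), ofReal_norm,
      ← intervalIntegral.integral_eq_sub_of_hasDerivAt (fun x _ => h.hasDerivAt x)
        (h.continuous_deriv.intervalIntegrable a b), intervalIntegral.integral_of_le hab]
    calc ‖∫ x in Set.Ioc a b, Y' x‖ₑ
        ≤ ∫⁻ x in Set.Ioc a b, ‖Y' x‖ₑ := enorm_integral_le_lintegral_enorm _
      _ = eLpNorm Y' 1 (volume.restrict (Set.Ioc a b)) := eLpNorm_one_eq_lintegral_enorm.symm
      _ ≤ eLpNorm Y' 2 (volume.restrict (Set.Ioc a b)) * ENNReal.ofReal √(b - a) := by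
        refine (eLpNorm_le_eLpNorm_mul_rpow_measure_univ one_le_two
          h.continuous_deriv.aestronglyMeasurable).trans_eq ?_
        rw [Measure.restrict_apply_univ, Real.volume_Ioc, Real.sqrt_eq_rpow,
          ENNReal.ofReal_rpow_of_nonneg (by linarith) (by norm_num)]
        norm_num
      _ ≤ ENNReal.ofReal (K * √(b - a)) := by
        rw [ENNReal.ofReal_mul hK]
        gcongr
  intro a b hab
  rcases le_total a b with hle | hle
  · rw [norm_sub_rev, abs_sub_comm, abs_of_nonneg (by linarith)]
    exact hordered a b hle (by linarith [neg_abs_le (a - b), pi_pos])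
  · rw [abs_of_nonneg (by linarith)]
    exact hordered b a hle (by linarith [le_abs_self (a - b), pi_pos])

theorem IsC1Loop.norm_sub_sub_smul_le (h : IsC1Loop Y Y') (hH : HalfHolder Y' K) {a b c : ℝ}
    (hK : 0 ≤ K) (hab : |b - a| ≤ π) (hc : c ∈ Set.uIcc a b) :
    ‖Y b - Y a - (b - a) • Y' c‖ ≤ K * √|b - a| * |b - a| := by
  have hbound (x : ℝ) (hx : x ∈ Set.uIcc a b) : ‖Y' x - Y' c‖ ≤ K * √|b - a| := by
    have hxc : |x - c| ≤ |b - a| :=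
      Set.abs_sub_le_of_uIcc_subset_uIcc (Set.uIcc_subset_uIcc hc hx)
    refine (hH x c (hxc.trans hab)).trans ?_
    gcongr
  have hmvt := (convex_uIcc a b).norm_image_sub_le_of_norm_hasDerivWithin_le
    (f := fun x => Y x - x • Y' c) (fun x _ => ((h.hasDerivAt x).sub
      (by simpa using (hasDerivAt_id x).smul_const (Y' c))).hasDerivWithinAt)
    hbound Set.left_mem_uIcc Set.right_mem_uIcc
  rw [Real.norm_eq_abs] at hmvt
  refine le_trans (le_of_eq ?_) hmvt
  congr 1
  module

theorem smul_secantDeriv (hτ : τ ≠ 0) : τ • secantDeriv Y Y' s τ = Y' (s + τ) - secant Y s τ :=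
  smul_inv_smul₀ hτ _

theorem IsC1Loop.tendsto_secant (h : IsC1Loop Y Y') (s : ℝ) :
    Tendsto (secant Y s) (𝓝[≠] 0) (𝓝 (Y' s)) :=
  hasDerivAt_iff_tendsto_slope_zero.1 (h.hasDerivAt s)

theorem IsC1Loop.hasDerivAt_secant (h : IsC1Loop Y Y') (hτ : τ ≠ 0) :
    HasDerivAt (secant Y s) (secantDeriv Y Y' s τ) τ := by
  have hd := (hasDerivAt_inv hτ).smul (((h.hasDerivAt (s + τ)).comp_const_add s τ).sub_const (Y s))
  refine hd.congr_deriv ?_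
  simp only [secantDeriv, secant, smul_sub, smul_smul]
  module

theorem IsC1Loop.hasDerivAt_secantDeriv (h : IsC1Loop Y Y') (h' : IsC1Loop Y' Y'') (hτ : τ ≠ 0) :
    HasDerivAt (secantDeriv Y Y' s)
      (τ⁻¹ • (Y'' (s + τ) - (2 : ℝ) • secantDeriv Y Y' s τ)) τ := by
  have hd := (hasDerivAt_inv hτ).smul
    (((h'.hasDerivAt (s + τ)).comp_const_add s τ).sub (h.hasDerivAt_secant (s := s) hτ))
  refine hd.congr_deriv ?_
  rw [Pi.sub_apply, ← smul_secantDeriv hτ]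
  match_scalars <;> field_simp; ring

theorem WellStretched.le_norm_secant (h : WellStretched Y l) (hτ : τ ≠ 0) (hτπ : |τ| ≤ π) :
    l ≤ ‖secant Y s τ‖ := by
  have := h (s + τ) s (by simpa using hτπ)
  rw [add_sub_cancel_left] at this
  rwa [secant, norm_smul, norm_inv, Real.norm_eq_abs, inv_mul_eq_div, le_div_iff₀ (abs_pos.2 hτ)]

namespace IsStretchedLoop

theorem le_norm_deriv (h : IsStretchedLoop Y Y' l K) : l ≤ ‖Y' s‖ := by
  refine ge_of_tendsto (h.tendsto_secant s).norm ?_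
  filter_upwards [self_mem_nhdsWithin,
    nhdsWithin_le_nhds (Metric.closedBall_mem_nhds (0 : ℝ) pi_pos)] with τ hτ hτπ
  exact h.wellStretched.le_norm_secant hτ (by simpa using hτπ)

theorem nonneg (h : IsStretchedLoop Y Y' l K) : 0 ≤ K := by
  have := h.halfHolder 1 0 (by simpa using one_le_pi_div_two.trans (by linarith [pi_pos]))
  simpa using (norm_nonneg _).trans this

/-- Comparing the tangent line at `s` with the curve at the two ends `s ± π` of one period, where
the curve takes the same value. -/
theorem norm_deriv_le (h : IsStretchedLoop Y Y' l K) : ‖Y' s‖ ≤ 2 * K := by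
  have hK := h.nonneg
  have hright := h.norm_sub_sub_smul_le h.halfHolder hK (a := s) (b := s + π) (c := s)
    (by simp [abs_of_pos pi_pos]) Set.left_mem_uIcc
  have hleft := h.norm_sub_sub_smul_le h.halfHolder hK (a := s) (b := s - π) (c := s)
    (by simp [abs_of_pos pi_pos]) Set.left_mem_uIcc
  have hends : Y (s + π) = Y (s - π) := by
    rw [← h.periodic (s - π)]; ring_nf
  rw [hends, add_sub_cancel_left, abs_of_pos pi_pos] at hright
  rw [sub_sub_cancel_left, abs_neg, abs_of_pos pi_pos] at hleft
  have hsqrt : √π ≤ 2 := Real.sqrt_le_iff.2 ⟨zero_le_two, by linarith [pi_le_four]⟩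
  have htwo : 2 * π * ‖Y' s‖ ≤ 2 * π * (K * √π) := by
    calc 2 * π * ‖Y' s‖ = ‖(Y (s - π) - Y s - (-π) • Y' s) - (Y (s - π) - Y s - π • Y' s)‖ := by
          have h2π : ‖2 * π‖ = 2 * π := by rw [Real.norm_eq_abs, abs_of_pos two_pi_pos]
          nth_rw 1 [← h2π]
          rw [← norm_smul]
          congr 1
          module
      _ ≤ K * √π * π + K * √π * π := (norm_sub_le _ _).trans (add_le_add hleft hright)
      _ = _ := by ring
  exact (le_of_mul_le_mul_left htwo two_pi_pos).trans (by nlinarith)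

theorem le_two_mul (h : IsStretchedLoop Y Y' l K) : l ≤ 2 * K :=
  (h.le_norm_deriv (s := 0)).trans h.norm_deriv_le

theorem norm_secant_le (h : IsStretchedLoop Y Y' l K) : ‖secant Y s τ‖ ≤ 2 * K := by
  rcases eq_or_ne τ 0 with rfl | hτ
  · simpa [secant] using h.nonneg
  have hmvt := convex_univ.norm_image_sub_le_of_norm_hasDerivWithin_le (x := s) (y := s + τ)
    (fun x _ => (h.hasDerivAt x).hasDerivWithinAt) (fun x _ => h.norm_deriv_le) trivial trivial
  rw [add_sub_cancel_left, Real.norm_eq_abs] at hmvt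
  rwa [secant, norm_smul, norm_inv, Real.norm_eq_abs, inv_mul_eq_div, div_le_iff₀ (abs_pos.2 hτ)]

theorem norm_secantDeriv_le (h : IsStretchedLoop Y Y' l K) (hτ : τ ≠ 0) (hτπ : |τ| ≤ π) :
    ‖secantDeriv Y Y' s τ‖ ≤ K * |τ| ^ (-(1 / 2) : ℝ) := by
  have happrox := h.norm_sub_sub_smul_le h.halfHolder h.nonneg (a := s) (b := s + τ) (c := s + τ)
    (by simpa using hτπ) Set.right_mem_uIcc
  rw [add_sub_cancel_left] at happrox
  have hsecant : secantDeriv Y Y' s τ = -(τ⁻¹ ^ 2) • (Y (s + τ) - Y s - τ • Y' (s + τ)) := by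
    simp only [secantDeriv, secant, smul_sub, smul_smul]
    match_scalars <;> field_simp
  have hτ' := abs_pos.2 hτ
  calc ‖secantDeriv Y Y' s τ‖ ≤ (|τ|⁻¹ ^ 2) * (K * √|τ| * |τ|) := by
        rw [hsecant, norm_smul, norm_neg, norm_pow, norm_inv, Real.norm_eq_abs]
        gcongr
    _ = K * (√|τ| / |τ|) := by field_simp
    _ = _ := by
        rw [Real.sqrt_eq_rpow, ← Real.rpow_sub_one hτ'.ne']
        norm_num

end IsStretchedLoop

end Curve

/-! ### The integrand in complex notation -/

/-- The smooth kernel `1/τ - τ/(4 sin² (τ/2))` of the contour dynamic equation. -/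
def cscKernel (τ : ℝ) : ℝ := 1 / τ - τ / (4 * sin (τ / 2) ^ 2)

theorem sq_sub_sin_sq_le {x : ℝ} (hx : |x| ≤ π / 2) : x ^ 2 - sin x ^ 2 ≤ x ^ 2 * sin x ^ 2 := by
  obtain ⟨hx₁, hx₂⟩ := abs_le.1 hx
  have hcos : cos x ^ 2 ≤ 1 / (x ^ 2 + 1) := by
    calc cos x ^ 2 ≤ (1 / √(x ^ 2 + 1)) ^ 2 := by
          refine pow_le_pow_left₀ (cos_nonneg_of_neg_pi_div_two_le_of_le hx₁ hx₂)
            (cos_le_one_div_sqrt_sq_add_one ?_ ?_) 2 <;> linarith [pi_pos]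
      _ = 1 / (x ^ 2 + 1) := by rw [div_pow, one_pow, Real.sq_sqrt (by positivity)]
  rw [le_div_iff₀ (by positivity)] at hcos
  nlinarith [sin_sq_add_cos_sq x]

theorem abs_cscKernel_le_one {τ : ℝ} (hτ : |τ| ≤ π) : |cscKernel τ| ≤ 1 := by
  rcases eq_or_ne τ 0 with rfl | hτ₀
  · simp [cscKernel]
  obtain ⟨x, rfl⟩ : ∃ x, τ = 2 * x := ⟨τ / 2, by ring⟩
  have hx₀ : x ≠ 0 := fun h => hτ₀ (by simp [h])
  have hx : |x| ≤ π / 2 := by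
    rw [abs_mul, abs_two] at hτ
    linarith
  have hsin : sin x ≠ 0 := by
    have := mul_abs_le_abs_sin hx
    exact abs_pos.1 ((mul_pos (by positivity) (abs_pos.2 hx₀)).trans_le this)
  have hnonneg : 0 ≤ x ^ 2 - sin x ^ 2 := sub_nonneg.2 sin_sq_le_sq
  calc |cscKernel (2 * x)| = (x ^ 2 - sin x ^ 2) / (2 * |x| * sin x ^ 2) := by
        have hform : cscKernel (2 * x) = -((x ^ 2 - sin x ^ 2) / (2 * x * sin x ^ 2)) := by
          rw [cscKernel, mul_div_cancel_left₀ x two_ne_zero]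
          field
        rw [hform, abs_neg, abs_div, abs_of_nonneg hnonneg, abs_mul, abs_mul, abs_two,
          abs_of_nonneg (sq_nonneg (sin x))]
    _ ≤ x ^ 2 * sin x ^ 2 / (2 * |x| * sin x ^ 2) := by gcongr; exact sq_sub_sin_sq_le hx
    _ = |x| / 2 := by
        rw [← sq_abs x]
        field
    _ ≤ 1 := by linarith [pi_le_four]

/-- Twice the orthogonal projection of `z` onto the real line spanned by `a`. -/
def twiceProj (a z : ℂ) : ℂ := z + a / conj a * conj z

theorem twiceProj_add (a z w : ℂ) : twiceProj a (z + w) = twiceProj a z + twiceProj a w := by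
  simp only [twiceProj, map_add]
  ring

theorem norm_twiceProj_le (a z : ℂ) : ‖twiceProj a z‖ ≤ 2 * ‖z‖ := by
  have ha : ‖a / conj a‖ ≤ 1 := by
    rw [norm_div, RCLike.norm_conj]
    exact div_self_le_one _
  calc ‖twiceProj a z‖ ≤ ‖z‖ + ‖a / conj a‖ * ‖z‖ := by
        simpa only [twiceProj, norm_mul, RCLike.norm_conj] using
          norm_add_le z (a / conj a * conj z)
    _ ≤ ‖z‖ + 1 * ‖z‖ := by gcongr
    _ = 2 * ‖z‖ := by ring

theorem norm_twiceProj_sub_le {a b : ℂ} (ha : a ≠ 0) (hb : b ≠ 0) (z : ℂ) :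
    ‖twiceProj a z - twiceProj b z‖ ≤ 2 * ‖a - b‖ / ‖a‖ * ‖z‖ := by
  have ha' : conj a ≠ 0 := by simpa using ha
  have hb' : conj b ≠ 0 := by simpa using hb
  have hsub : twiceProj a z - twiceProj b z = (a - b - b / conj b * conj (a - b)) / conj a *
      conj z := by
    simp only [twiceProj, map_sub]
    field
  have hnum : ‖a - b - b / conj b * conj (a - b)‖ ≤ 2 * ‖a - b‖ := by
    refine (norm_sub_le _ _).trans_eq ?_
    rw [norm_mul, norm_div, RCLike.norm_conj, RCLike.norm_conj, div_self (by simpa using hb)]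
    ring
  rw [hsub, norm_mul, norm_div, RCLike.norm_conj, RCLike.norm_conj]
  gcongr

/-- The derivative of `twiceProj a z` in `a`, in the direction `p`. -/
def twiceProjDeriv (a p z : ℂ) : ℂ := (p / conj a - a * conj p / conj a ^ 2) * conj z

theorem norm_twiceProjDeriv_le {a : ℂ} (ha : a ≠ 0) (p z : ℂ) :
    ‖twiceProjDeriv a p z‖ ≤ 2 * ‖p‖ / ‖a‖ * ‖z‖ := by
  rw [twiceProjDeriv, norm_mul, RCLike.norm_conj]
  gcongr
  refine (norm_sub_le _ _).trans_eq ?_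
  simp only [norm_div, norm_mul, norm_pow, RCLike.norm_conj]
  field

theorem hasDerivAt_twiceProj {a z : ℝ → ℂ} {p z' : ℂ} {τ : ℝ} (ha : HasDerivAt a p τ)
    (hz : HasDerivAt z z' τ) (ha₀ : a τ ≠ 0) :
    HasDerivAt (fun t => twiceProj (a t) (z t))
      (twiceProj (a τ) z' + twiceProjDeriv (a τ) p (z τ)) τ := by
  have ha' : conj (a τ) ≠ 0 := by simpa using ha₀
  refine (hz.add ((ha.div ha.star ha').mul hz.star)).congr_deriv ?_
  simp only [twiceProj, twiceProjDeriv, ← starRingEnd_apply, Pi.div_apply]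
  field

/-- The first-order part of the integrand: writing `M = a + τ p` for the velocity when `a` is the
secant and `p` its derivative, `M² / a - a = 2 τ (p + τ p² / (2 a))`. -/
def slopeTerm (τ : ℝ) (a p : ℂ) : ℂ := p + τ * p ^ 2 / (2 * a)

/-- The integrand of `g_Y` in complex notation, as a function of the secant `a` and of its
derivative `p`. -/
def remainderIntegrand (τ : ℝ) (a p : ℂ) : ℂ := twiceProj a (slopeTerm τ a p) + cscKernel τ * a

section Algebra

variable {a b p q : ℂ} {τ l A : ℝ}

theorem norm_slopeTerm_le (hl : 0 < l) (ha : l ≤ ‖a‖) (hlA : l ≤ A) (hp : ‖τ * p‖ ≤ 2 * A) :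
    ‖slopeTerm τ a p‖ ≤ 2 * A / l * ‖p‖ := by
  have hA : 0 < A := hl.trans_le hlA
  calc ‖slopeTerm τ a p‖ ≤ ‖p‖ + ‖τ * p‖ * ‖p‖ / (2 * ‖a‖) := by
        refine (norm_add_le _ _).trans_eq ?_
        rw [norm_div, norm_mul, norm_mul, norm_mul, norm_pow, Complex.norm_ofNat]
        ring
    _ ≤ A / l * ‖p‖ + 2 * A * ‖p‖ / (2 * l) := by
        gcongr
        exact le_mul_of_one_le_left (norm_nonneg _) ((one_le_div hl).2 hlA)
    _ = 2 * A / l * ‖p‖ := by ring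

theorem norm_remainderIntegrand_le (hl : 0 < l) (ha : l ≤ ‖a‖) (haA : ‖a‖ ≤ A)
    (hp : ‖τ * p‖ ≤ 2 * A) (hτ : |τ| ≤ π) :
    ‖remainderIntegrand τ a p‖ ≤ 4 * A / l * ‖p‖ + A := by
  have hslope := norm_slopeTerm_le hl ha (ha.trans haA) hp
  calc ‖remainderIntegrand τ a p‖ ≤ ‖twiceProj a (slopeTerm τ a p)‖ + |cscKernel τ| * ‖a‖ := by
        refine (norm_add_le _ _).trans_eq ?_
        rw [norm_mul, Complex.norm_real, Real.norm_eq_abs]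
    _ ≤ 2 * (2 * A / l * ‖p‖) + 1 * A := by
        gcongr
        · exact (norm_twiceProj_le _ _).trans (by gcongr)
        · exact abs_cscKernel_le_one hτ
    _ = 4 * A / l * ‖p‖ + A := by ring

/-- The coefficient of `p - q` in the difference of `slopeTerm τ a p` and `slopeTerm τ b q`. -/
def slopeCoeff (τ : ℝ) (a p q : ℂ) : ℂ := 1 + τ * (p + q) / (2 * a)

/-- The total `τ`-derivative of `slopeCoeff τ a p q` along two curves with secants `a`, `b`, secant
derivatives `p`, `q` and second derivatives `M`, `N`. -/
def slopeCoeffDeriv (τ : ℝ) (a p q M N : ℂ) : ℂ :=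
  (M - p + (N - q)) / (2 * a) - τ * (p + q) * p / (2 * a ^ 2)

theorem slopeTerm_sub_slopeTerm (ha : a ≠ 0) (hb : b ≠ 0) :
    slopeTerm τ a p - slopeTerm τ b q =
      slopeCoeff τ a p q * (p - q) - τ * q ^ 2 / (2 * a * b) * (a - b) := by
  simp only [slopeTerm, slopeCoeff]
  field

theorem norm_mul_add_le (hp : ‖τ * p‖ ≤ 2 * A) (hq : ‖τ * q‖ ≤ 2 * A) :
    ‖τ * (p + q)‖ ≤ 4 * A := by
  rw [mul_add]
  linarith [norm_add_le (τ * p) (τ * q)]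

theorem norm_slopeCoeff_le (hl : 0 < l) (ha : l ≤ ‖a‖) (hlA : l ≤ A) (hp : ‖τ * p‖ ≤ 2 * A)
    (hq : ‖τ * q‖ ≤ 2 * A) : ‖slopeCoeff τ a p q‖ ≤ 3 * A / l := by
  have hA : 0 < A := hl.trans_le hlA
  calc ‖slopeCoeff τ a p q‖ ≤ 1 + ‖τ * (p + q)‖ / (2 * ‖a‖) := by
        refine (norm_add_le _ _).trans_eq ?_
        rw [norm_one, norm_div, norm_mul 2, Complex.norm_ofNat]
    _ ≤ A / l + 4 * A / (2 * l) := by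
        gcongr
        · exact (one_le_div hl).2 hlA
        · exact norm_mul_add_le hp hq
    _ = 3 * A / l := by ring

theorem norm_slopeCoeffDeriv_le (hl : 0 < l) (ha : l ≤ ‖a‖) (hlA : l ≤ A) (hp : ‖τ * p‖ ≤ 2 * A)
    (hq : ‖τ * q‖ ≤ 2 * A) (M N : ℂ) :
    ‖slopeCoeffDeriv τ a p q M N‖ ≤ 3 * A / l ^ 2 * (‖p‖ + ‖q‖ + ‖M‖ + ‖N‖) := by
  have hA : 0 < A := hl.trans_le hlA
  have hnum : ‖M - p + (N - q)‖ ≤ ‖p‖ + ‖q‖ + ‖M‖ + ‖N‖ := by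
    linarith [norm_add_le (M - p) (N - q), norm_sub_le M p, norm_sub_le N q]
  calc ‖slopeCoeffDeriv τ a p q M N‖
      ≤ ‖M - p + (N - q)‖ / (2 * ‖a‖) + ‖τ * (p + q)‖ * ‖p‖ / (2 * ‖a‖ ^ 2) := by
        refine (norm_sub_le _ _).trans_eq ?_
        rw [norm_div, norm_div, norm_mul _ p, norm_mul 2, norm_mul 2, norm_pow, Complex.norm_ofNat]
    _ ≤ (‖p‖ + ‖q‖ + ‖M‖ + ‖N‖) / (2 * l) + 4 * A * ‖p‖ / (2 * l ^ 2) := by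
        gcongr
        exact norm_mul_add_le hp hq
    _ ≤ A / l * ((‖p‖ + ‖q‖ + ‖M‖ + ‖N‖) / l) + 2 * A / l ^ 2 * (‖p‖ + ‖q‖ + ‖M‖ + ‖N‖) := by
        refine add_le_add ?_ ?_
        · calc _ ≤ 1 * ((‖p‖ + ‖q‖ + ‖M‖ + ‖N‖) / l) := by
                rw [one_mul]
                gcongr
                linarith
            _ ≤ _ := by gcongr; exact (one_le_div hl).2 hlA
        · rw [show 4 * A * ‖p‖ / (2 * l ^ 2) = 2 * A / l ^ 2 * ‖p‖ by ring]
          gcongr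
          linarith [norm_nonneg q, norm_nonneg M, norm_nonneg N]
    _ = _ := by ring

/-- An exact `τ`-primitive of the part of the difference of two integrands that is not controlled by
`a - b` itself. -/
def differencePrimitive (τ : ℝ) (a b p q : ℂ) : ℂ := twiceProj a (slopeCoeff τ a p q * (a - b))

/-- What is left of the difference of two integrands once the derivative of `differencePrimitive`
has been subtracted; it contains `a - b` but not `p - q`. -/
def differenceError (τ : ℝ) (a b p q M N : ℂ) : ℂ :=
  twiceProj a (-(slopeCoeffDeriv τ a p q M N + τ * q ^ 2 / (2 * a * b)) * (a - b)) +
    (twiceProj a (slopeTerm τ b q) - twiceProj b (slopeTerm τ b q)) -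
    twiceProjDeriv a p (slopeCoeff τ a p q * (a - b)) + cscKernel τ * (a - b)

theorem norm_differencePrimitive_le (hl : 0 < l) (ha : l ≤ ‖a‖) (hlA : l ≤ A)
    (hp : ‖τ * p‖ ≤ 2 * A) (hq : ‖τ * q‖ ≤ 2 * A) :
    ‖differencePrimitive τ a b p q‖ ≤ 6 * A / l * ‖a - b‖ := by
  refine (norm_twiceProj_le _ _).trans ?_
  rw [norm_mul]
  calc 2 * (‖slopeCoeff τ a p q‖ * ‖a - b‖) ≤ 2 * (3 * A / l * ‖a - b‖) := by
        gcongr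
        exact norm_slopeCoeff_le hl ha hlA hp hq
    _ = _ := by ring

theorem norm_mul_sq_div_le (hl : 0 < l) (ha : l ≤ ‖a‖) (hb : l ≤ ‖b‖) (hq : ‖τ * q‖ ≤ 2 * A) :
    ‖τ * q ^ 2 / (2 * a * b)‖ ≤ A / l ^ 2 * ‖q‖ := by
  have hA : 0 ≤ 2 * A := (norm_nonneg _).trans hq
  calc ‖τ * q ^ 2 / (2 * a * b)‖ = ‖τ * q‖ * ‖q‖ / (2 * ‖a‖ * ‖b‖) := by
        rw [sq, ← mul_assoc, norm_div, norm_mul _ q, norm_mul (2 * a), norm_mul 2,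
          Complex.norm_ofNat]
    _ ≤ 2 * A * ‖q‖ / (2 * l * l) := by gcongr
    _ = A / l ^ 2 * ‖q‖ := by field

theorem norm_differenceError_le (hl : 0 < l) (ha : l ≤ ‖a‖) (hb : l ≤ ‖b‖) (hlA : l ≤ A)
    (hp : ‖τ * p‖ ≤ 2 * A) (hq : ‖τ * q‖ ≤ 2 * A) (hτ : |τ| ≤ π) (M N : ℂ) :
    ‖differenceError τ a b p q M N‖ ≤
      (18 * A / l ^ 2 * (‖p‖ + ‖q‖ + ‖M‖ + ‖N‖) + 1) * ‖a - b‖ := by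
  have hA : 0 < A := hl.trans_le hlA
  set S := ‖p‖ + ‖q‖ + ‖M‖ + ‖N‖
  have hpS : ‖p‖ ≤ S := by linarith [norm_nonneg q, norm_nonneg M, norm_nonneg N]
  have hqS : ‖q‖ ≤ S := by linarith [norm_nonneg p, norm_nonneg M, norm_nonneg N]
  have hfirst : ‖twiceProj a (-(slopeCoeffDeriv τ a p q M N + τ * q ^ 2 / (2 * a * b)) * (a - b))‖ ≤
      2 * ((3 * A / l ^ 2 * S + A / l ^ 2 * S) * ‖a - b‖) := by
    refine (norm_twiceProj_le _ _).trans ?_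
    rw [norm_mul, norm_neg]
    gcongr
    refine norm_add_le_of_le (norm_slopeCoeffDeriv_le hl ha hlA hp hq M N) ?_
    exact (norm_mul_sq_div_le hl ha hb hq).trans (by gcongr)
  have hsecond : ‖twiceProj a (slopeTerm τ b q) - twiceProj b (slopeTerm τ b q)‖ ≤
      2 * ‖a - b‖ / l * (2 * A / l * S) := by
    refine (norm_twiceProj_sub_le (norm_pos_iff.1 (hl.trans_le ha))
      (norm_pos_iff.1 (hl.trans_le hb)) _).trans ?_
    gcongr
    exact (norm_slopeTerm_le hl hb hlA hq).trans (by gcongr)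
  have hthird : ‖twiceProjDeriv a p (slopeCoeff τ a p q * (a - b))‖ ≤
      2 * S / l * (3 * A / l * ‖a - b‖) := by
    refine (norm_twiceProjDeriv_le (norm_pos_iff.1 (hl.trans_le ha)) _ _).trans ?_
    rw [norm_mul]
    gcongr
    exact norm_slopeCoeff_le hl ha hlA hp hq
  have hfourth : ‖(cscKernel τ : ℂ) * (a - b)‖ ≤ 1 * ‖a - b‖ := by
    rw [norm_mul, Complex.norm_real, Real.norm_eq_abs]
    gcongr
    exact abs_cscKernel_le_one hτ
  refine (norm_add_le_of_le (norm_sub_le_of_le (norm_add_le_of_le hfirst hsecond) hthird)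
    hfourth).trans_eq ?_
  ring

theorem remainderIntegrand_sub_sub_differenceError (ha : a ≠ 0) (hb : b ≠ 0) (M N : ℂ) :
    remainderIntegrand τ a p - remainderIntegrand τ b q - differenceError τ a b p q M N =
      twiceProj a (slopeCoeffDeriv τ a p q M N * (a - b) + slopeCoeff τ a p q * (p - q)) +
        twiceProjDeriv a p (slopeCoeff τ a p q * (a - b)) := by
  have hslope : slopeTerm τ a p = slopeTerm τ b q +
      (slopeCoeff τ a p q * (p - q) + -(τ * q ^ 2 / (2 * a * b) * (a - b))) := by
    rw [← sub_eq_add_neg, ← slopeTerm_sub_slopeTerm ha hb, add_sub_cancel]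
  have herror : twiceProj a (-(slopeCoeffDeriv τ a p q M N + τ * q ^ 2 / (2 * a * b)) * (a - b)) =
      twiceProj a (-(τ * q ^ 2 / (2 * a * b) * (a - b))) -
        twiceProj a (slopeCoeffDeriv τ a p q M N * (a - b)) := by
    rw [eq_sub_iff_add_eq, ← twiceProj_add]
    ring_nf
  simp only [remainderIntegrand, differenceError, hslope, herror, twiceProj_add]
  ring

end Algebra

theorem hasDerivAt_differencePrimitive {a b p q : ℝ → ℂ} {M N : ℂ} {τ : ℝ}
    (ha : HasDerivAt a (p τ) τ) (hb : HasDerivAt b (q τ) τ)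
    (hp : HasDerivAt p (τ⁻¹ • (M - (2 : ℝ) • p τ)) τ)
    (hq : HasDerivAt q (τ⁻¹ • (N - (2 : ℝ) • q τ)) τ) (hτ : τ ≠ 0) (ha₀ : a τ ≠ 0) (hb₀ : b τ ≠ 0) :
    HasDerivAt (fun t => differencePrimitive t (a t) (b t) (p t) (q t))
      (remainderIntegrand τ (a τ) (p τ) - remainderIntegrand τ (b τ) (q τ) -
        differenceError τ (a τ) (b τ) (p τ) (q τ) M N) τ := by
  have hτ' : (τ : ℂ) ≠ 0 := mod_cast hτ
  have hcoeff : HasDerivAt (fun t : ℝ => slopeCoeff t (a t) (p t) (q t))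
      (slopeCoeffDeriv τ (a τ) (p τ) (q τ) M N) τ := by
    refine (((hasDerivAt_id τ).ofReal_comp.mul (hp.add hq)).div (ha.const_mul 2)
      (by simpa using ha₀)).const_add 1 |>.congr_deriv ?_
    simp only [slopeCoeffDeriv, Pi.add_apply, Pi.mul_apply, Complex.real_smul, id_eq]
    push_cast
    field_simp
    ring
  rw [remainderIntegrand_sub_sub_differenceError ha₀ hb₀]
  exact hasDerivAt_twiceProj ha (hcoeff.mul (ha.sub hb)) ha₀

/-! ### Integration by parts in `τ` -/

theorem intervalIntegrable_abs_rpow {r : ℝ} (hr : -1 < r) (a : ℝ) :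
    IntervalIntegrable (fun τ : ℝ => |τ| ^ r) volume (-a) a := by
  have hpos (b : ℝ) (hb : 0 ≤ b) : IntervalIntegrable (fun τ : ℝ => |τ| ^ r) volume 0 b := by
    refine (intervalIntegral.intervalIntegrable_rpow' hr).congr fun x hx => ?_
    rw [Set.uIoc_of_le hb] at hx
    simp only [abs_of_pos hx.1]
  have hright (b : ℝ) : IntervalIntegrable (fun τ : ℝ => |τ| ^ r) volume 0 b := by
    rcases le_total 0 b with hb | hb
    · exact hpos b hb
    · simpa using (IntervalIntegrable.iff_comp_neg (f := fun τ : ℝ => |τ| ^ r)).1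
        (hpos (-b) (neg_nonneg.2 hb))
  exact (hright (-a)).symm.trans (hright a)

theorem integral_eq_sub_of_hasDerivAt_of_tendsto_nhdsNE {E : Type*} [NormedAddCommGroup E]
    [NormedSpace ℝ E] [CompleteSpace E] {f f' : ℝ → E} {a b c : ℝ} {y : E}
    (hc : c ∈ Set.Ioo a b) (hderiv : ∀ x ∈ Set.Icc a b, x ≠ c → HasDerivAt f (f' x) x)
    (hint : IntervalIntegrable f' volume a b) (hlim : Tendsto f (𝓝[≠] c) (𝓝 y)) :
    ∫ x in a..b, f' x = f b - f a := by
  have hcab : c ∈ Set.uIcc a b := Set.mem_uIcc_of_le hc.1.le hc.2.le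
  have hleft : IntervalIntegrable f' volume a c :=
    hint.mono_set (Set.uIcc_subset_uIcc Set.left_mem_uIcc hcab)
  have hright : IntervalIntegrable f' volume c b :=
    hint.mono_set (Set.uIcc_subset_uIcc hcab Set.right_mem_uIcc)
  have ha := hderiv a (Set.left_mem_Icc.2 (hc.1.trans hc.2).le) hc.1.ne
  have hb := hderiv b (Set.right_mem_Icc.2 (hc.1.trans hc.2).le) hc.2.ne'
  rw [← intervalIntegral.integral_add_adjacent_intervals hleft hright,
    intervalIntegral.integral_eq_sub_of_hasDerivAt_of_tendsto hc.1
      (fun x hx => hderiv x ⟨hx.1.le, (hx.2.trans hc.2).le⟩ hx.2.ne) hleft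
      (ha.continuousAt.tendsto.mono_left nhdsWithin_le_nhds)
      (hlim.mono_left (nhdsWithin_mono c fun x hx => ne_of_lt hx)),
    intervalIntegral.integral_eq_sub_of_hasDerivAt_of_tendsto hc.2
      (fun x hx => hderiv x ⟨(hc.1.trans hx.1).le, hx.2.le⟩ hx.1.ne') hright
      (hlim.mono_left (nhdsWithin_mono c fun x hx => ne_of_gt hx))
      (hb.continuousAt.tendsto.mono_left nhdsWithin_le_nhds)]
  abel

section ComplexCurve

variable {Y Y' Y₁ Y₁' Y₁'' Y₂ Y₂' Y₂'' : ℝ → ℂ} {K l s τ : ℝ}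

/-- The integrand of `g_Y` for a planar curve written in complex notation. -/
def contourIntegrand (Y Y' : ℝ → ℂ) (s τ : ℝ) : ℂ :=
  remainderIntegrand τ (secant Y s τ) (secantDeriv Y Y' s τ)

theorem measurable_secant (hY : Measurable Y) :
    Measurable fun x : ℝ × ℝ => secant Y x.1 x.2 := by
  unfold secant
  fun_prop

theorem measurable_secantDeriv (hY : Measurable Y) (hY' : Measurable Y') :
    Measurable fun x : ℝ × ℝ => secantDeriv Y Y' x.1 x.2 := by
  have := measurable_secant hY
  unfold secantDeriv
  fun_prop

theorem measurable_contourIntegrand (hY : Measurable Y) (hY' : Measurable Y') :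
    Measurable fun x : ℝ × ℝ => contourIntegrand Y Y' x.1 x.2 := by
  have := measurable_secant hY
  have := measurable_secantDeriv hY hY'
  have : Measurable fun z : ℂ => conj z := Complex.continuous_conj.measurable
  unfold contourIntegrand remainderIntegrand twiceProj slopeTerm cscKernel
  fun_prop

/-- `differenceError` along a pair of curves. -/
def contourError (Y₁ Y₁' Y₁'' Y₂ Y₂' Y₂'' : ℝ → ℂ) (s τ : ℝ) : ℂ :=
  differenceError τ (secant Y₁ s τ) (secant Y₂ s τ) (secantDeriv Y₁ Y₁' s τ)
    (secantDeriv Y₂ Y₂' s τ) (Y₁'' (s + τ)) (Y₂'' (s + τ))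

theorem measurable_contourError (hY₁ : Measurable Y₁) (hY₁' : Measurable Y₁')
    (hY₁'' : Measurable Y₁'') (hY₂ : Measurable Y₂) (hY₂' : Measurable Y₂')
    (hY₂'' : Measurable Y₂'') :
    Measurable fun x : ℝ × ℝ => contourError Y₁ Y₁' Y₁'' Y₂ Y₂' Y₂'' x.1 x.2 := by
  have := measurable_secant hY₁
  have := measurable_secant hY₂
  have := measurable_secantDeriv hY₁ hY₁'
  have := measurable_secantDeriv hY₂ hY₂'
  have : Measurable fun z : ℂ => conj z := Complex.continuous_conj.measurable
  unfold contourError differenceError twiceProjDeriv twiceProj slopeTerm slopeCoeffDeriv slopeCoeff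
    cscKernel
  fun_prop

/-- `differencePrimitive` along a pair of curves. -/
def contourPrimitive (Y₁ Y₁' Y₂ Y₂' : ℝ → ℂ) (s τ : ℝ) : ℂ :=
  differencePrimitive τ (secant Y₁ s τ) (secant Y₂ s τ) (secantDeriv Y₁ Y₁' s τ)
    (secantDeriv Y₂ Y₂' s τ)

theorem IsC1Loop.tendsto_mul_secantDeriv (h : IsC1Loop Y Y') (s : ℝ) :
    Tendsto (fun τ : ℝ => (τ : ℂ) * secantDeriv Y Y' s τ) (𝓝[≠] 0) (𝓝 0) := by
  have hshift : Tendsto (fun τ => Y' (s + τ)) (𝓝[≠] 0) (𝓝 (Y' s)) := by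
    have : ContinuousAt (fun τ => Y' (s + τ)) 0 := by
      have := h.continuous_deriv
      fun_prop
    simpa [ContinuousAt] using this.tendsto.mono_left (nhdsWithin_le_nhds (s := {0}ᶜ))
  have hsub := hshift.sub (h.tendsto_secant s)
  rw [sub_self] at hsub
  refine hsub.congr' ?_
  filter_upwards [self_mem_nhdsWithin] with τ hτ
  rw [← Complex.real_smul, smul_secantDeriv hτ]

theorem intervalIntegrable_contourBound (K l : ℝ) :
    IntervalIntegrable (fun τ => 8 * K / l * (K * |τ| ^ (-(1 / 2) : ℝ)) + 2 * K) volume (-π) π :=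
  (((intervalIntegrable_abs_rpow (by norm_num) π).const_mul K).const_mul _).add (by simp)

namespace IsStretchedLoop

theorem norm_mul_secantDeriv_le (h : IsStretchedLoop Y Y' l K) (s τ : ℝ) :
    ‖(τ : ℂ) * secantDeriv Y Y' s τ‖ ≤ 2 * (2 * K) := by
  rcases eq_or_ne τ 0 with rfl | hτ
  · simpa using h.nonneg
  rw [← Complex.real_smul, smul_secantDeriv hτ]
  linarith [norm_sub_le (Y' (s + τ)) (secant Y s τ), h.norm_deriv_le (s := s + τ),
    h.norm_secant_le (s := s) (τ := τ)]

theorem norm_contourIntegrand_le (h : IsStretchedLoop Y Y' l K) (hτ : τ ≠ 0) (hτπ : |τ| ≤ π) :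
    ‖contourIntegrand Y Y' s τ‖ ≤ 8 * K / l * (K * |τ| ^ (-(1 / 2) : ℝ)) + 2 * K := by
  have hl := h.pos
  have hK := h.nonneg
  refine (norm_remainderIntegrand_le hl (h.wellStretched.le_norm_secant hτ hτπ) h.norm_secant_le
    (h.norm_mul_secantDeriv_le s τ) hτπ).trans ?_
  rw [show 4 * (2 * K) / l = 8 * K / l by ring]
  gcongr
  exact h.norm_secantDeriv_le hτ hτπ

theorem intervalIntegrable_contourIntegrand (h : IsStretchedLoop Y Y' l K) (s : ℝ) :
    IntervalIntegrable (contourIntegrand Y Y' s) volume (-π) π := by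
  refine (intervalIntegrable_contourBound K l).mono_fun
    ((measurable_contourIntegrand h.continuous.measurable h.continuous_deriv.measurable).comp
      measurable_prodMk_left).aestronglyMeasurable ?_
  rw [EventuallyLE, ae_restrict_iff' measurableSet_uIoc, Set.uIoc_of_le (by linarith [pi_pos])]
  filter_upwards [Measure.ae_ne volume 0] with τ hτ hτπ
  exact (h.norm_contourIntegrand_le hτ (abs_le.2 ⟨hτπ.1.le, hτπ.2⟩)).trans (le_abs_self _)

theorem norm_contourPrimitive_le (h₁ : IsStretchedLoop Y₁ Y₁' l K)
    (h₂ : IsStretchedLoop Y₂ Y₂' l K) (hτ : τ ≠ 0) (hτπ : |τ| ≤ π) :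
    ‖contourPrimitive Y₁ Y₁' Y₂ Y₂' s τ‖ ≤
      6 * (2 * K) / l * ‖secant Y₁ s τ - secant Y₂ s τ‖ :=
  norm_differencePrimitive_le h₁.pos (h₁.wellStretched.le_norm_secant hτ hτπ) h₁.le_two_mul
    (h₁.norm_mul_secantDeriv_le s τ) (h₂.norm_mul_secantDeriv_le s τ)

theorem norm_contourError_le (h₁ : IsStretchedLoop Y₁ Y₁' l K)
    (h₂ : IsStretchedLoop Y₂ Y₂' l K) (hτ : τ ≠ 0) (hτπ : |τ| ≤ π) :
    ‖contourError Y₁ Y₁' Y₁'' Y₂ Y₂' Y₂'' s τ‖ ≤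
      (18 * (2 * K) / l ^ 2 * (‖secantDeriv Y₁ Y₁' s τ‖ + ‖secantDeriv Y₂ Y₂' s τ‖ +
        ‖Y₁'' (s + τ)‖ + ‖Y₂'' (s + τ)‖) + 1) * ‖secant Y₁ s τ - secant Y₂ s τ‖ :=
  norm_differenceError_le h₁.pos (h₁.wellStretched.le_norm_secant hτ hτπ)
    (h₂.wellStretched.le_norm_secant hτ hτπ) h₁.le_two_mul (h₁.norm_mul_secantDeriv_le s τ)
    (h₂.norm_mul_secantDeriv_le s τ) hτπ _ _

theorem hasDerivAt_contourPrimitive (h₁ : IsStretchedLoop Y₁ Y₁' l K) (h₁' : IsC1Loop Y₁' Y₁'')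
    (h₂ : IsStretchedLoop Y₂ Y₂' l K) (h₂' : IsC1Loop Y₂' Y₂'') (hτ : τ ≠ 0) (hτπ : |τ| ≤ π) :
    HasDerivAt (contourPrimitive Y₁ Y₁' Y₂ Y₂' s)
      (contourIntegrand Y₁ Y₁' s τ - contourIntegrand Y₂ Y₂' s τ -
        contourError Y₁ Y₁' Y₁'' Y₂ Y₂' Y₂'' s τ) τ :=
  hasDerivAt_differencePrimitive (h₁.hasDerivAt_secant hτ) (h₂.hasDerivAt_secant hτ)
    (h₁.hasDerivAt_secantDeriv h₁' hτ) (h₂.hasDerivAt_secantDeriv h₂' hτ) hτ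
    (norm_pos_iff.1 (h₁.pos.trans_le (h₁.wellStretched.le_norm_secant hτ hτπ)))
    (norm_pos_iff.1 (h₂.pos.trans_le (h₂.wellStretched.le_norm_secant hτ hτπ)))

theorem tendsto_contourPrimitive (h₁ : IsStretchedLoop Y₁ Y₁' l K)
    (h₂ : IsStretchedLoop Y₂ Y₂' l K) (s : ℝ) :
    Tendsto (contourPrimitive Y₁ Y₁' Y₂ Y₂' s) (𝓝[≠] 0)
      (𝓝 (twiceProj (Y₁' s) (Y₁' s - Y₂' s))) := by
  have hne : Y₁' s ≠ 0 := norm_pos_iff.1 (h₁.pos.trans_le h₁.le_norm_deriv)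
  have ha := h₁.tendsto_secant s
  have hsub := ha.sub (h₂.tendsto_secant s)
  have hsum := (h₁.tendsto_mul_secantDeriv s).add (h₂.tendsto_mul_secantDeriv s)
  have hz : Tendsto (fun τ => slopeCoeff τ (secant Y₁ s τ) (secantDeriv Y₁ Y₁' s τ)
      (secantDeriv Y₂ Y₂' s τ) * (secant Y₁ s τ - secant Y₂ s τ)) (𝓝[≠] 0)
      (𝓝 (Y₁' s - Y₂' s)) := by
    have := ((hsum.div (ha.const_mul 2) (by simpa using hne)).const_add 1).mul hsub
    simpa only [slopeCoeff, Pi.div_apply, mul_add, add_zero, zero_div, one_mul] using this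
  have hconj {u : ℝ → ℂ} {z : ℂ} (hu : Tendsto u (𝓝[≠] 0) (𝓝 z)) :
      Tendsto (fun τ => conj (u τ)) (𝓝[≠] 0) (𝓝 (conj z)) :=
    (Complex.continuous_conj.tendsto z).comp hu
  exact hz.add ((ha.div (hconj ha) (by simpa using hne)).mul (hconj hz))

end IsStretchedLoop

end ComplexCurve

/-! ### The estimate for `C²` curves -/

theorem memLp_two_periodMeasure_of_continuous {f : ℝ → ℂ} (hf : Continuous f) :
    MemLp f 2 periodMeasure := by
  obtain ⟨B, hB⟩ := (isCompact_Icc (a := -π) (b := π)).exists_bound_of_continuousOn hf.continuousOn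
  refine MemLp.of_bound hf.aestronglyMeasurable B ?_
  filter_upwards [ae_restrict_mem measurableSet_Ioc] with s hs
  exact hB s (Set.Ioc_subset_Icc_self hs)

theorem eLpNorm_le_mul_add_add {α E : Type*} [MeasurableSpace α] {μ : Measure α}
    [NormedAddCommGroup E] {F : α → E} {u v w : α → ℝ} {c : ℝ} {p : ℝ≥0∞} (hp : 1 ≤ p)
    (hc : 0 ≤ c) (hF : ∀ a, ‖F a‖ ≤ c * (u a + v a) + w a) (hu : AEStronglyMeasurable u μ)
    (hv : AEStronglyMeasurable v μ) (hw : AEStronglyMeasurable w μ) :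
    eLpNorm F p μ ≤ ENNReal.ofReal c * (eLpNorm u p μ + eLpNorm v p μ) + eLpNorm w p μ := by
  calc eLpNorm F p μ ≤ eLpNorm (c • (u + v) + w) p μ := eLpNorm_mono_real hF
    _ ≤ eLpNorm (c • (u + v)) p μ + eLpNorm w p μ :=
        eLpNorm_add_le ((hu.add hv).const_smul c) hw hp
    _ ≤ ENNReal.ofReal c * (eLpNorm u p μ + eLpNorm v p μ) + eLpNorm w p μ := by
        rw [eLpNorm_const_smul, Real.enorm_of_nonneg hc]
        gcongr
        exact eLpNorm_add_le hu hv hp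

theorem continuous_secant {E : Type*} [NormedAddCommGroup E] [NormedSpace ℝ E] {Y : ℝ → E}
    (hY : Continuous Y) (τ : ℝ) : Continuous fun s => secant Y s τ := by
  unfold secant
  fun_prop

theorem continuous_secantDeriv {E : Type*} [NormedAddCommGroup E] [NormedSpace ℝ E]
    {Y Y' : ℝ → E} (hY : Continuous Y) (hY' : Continuous Y') (τ : ℝ) :
    Continuous fun s => secantDeriv Y Y' s τ := by
  have := continuous_secant hY τ
  unfold secantDeriv
  fun_prop

theorem secant_sub {E : Type*} [NormedAddCommGroup E] [NormedSpace ℝ E] (Y₁ Y₂ : ℝ → E)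
    (s τ : ℝ) : secant (Y₁ - Y₂) s τ = secant Y₁ s τ - secant Y₂ s τ := by
  simp only [secant, Pi.sub_apply, ← smul_sub]
  congr 1
  abel

section DifferenceEstimate

variable {Y₁ Y₁' Y₁'' Y₂ Y₂' Y₂'' : ℝ → ℂ} {K l s τ : ℝ}

namespace IsStretchedLoop

theorem integral_contourIntegrand_sub (h₁ : IsStretchedLoop Y₁ Y₁' l K) (h₁' : IsC1Loop Y₁' Y₁'')
    (h₂ : IsStretchedLoop Y₂ Y₂' l K) (h₂' : IsC1Loop Y₂' Y₂'')
    (herr : IntervalIntegrable (contourError Y₁ Y₁' Y₁'' Y₂ Y₂' Y₂'' s) volume (-π) π) :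
    (∫ τ in (-π)..π, contourIntegrand Y₁ Y₁' s τ) - ∫ τ in (-π)..π, contourIntegrand Y₂ Y₂' s τ =
      contourPrimitive Y₁ Y₁' Y₂ Y₂' s π - contourPrimitive Y₁ Y₁' Y₂ Y₂' s (-π) +
        ∫ τ in (-π)..π, contourError Y₁ Y₁' Y₁'' Y₂ Y₂' Y₂'' s τ := by
  have hF₁ := h₁.intervalIntegrable_contourIntegrand s
  have hF₂ := h₂.intervalIntegrable_contourIntegrand s
  rw [← integral_eq_sub_of_hasDerivAt_of_tendsto_nhdsNE (c := 0) ⟨by simp [pi_pos], pi_pos⟩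
    (fun τ hτπ hτ => h₁.hasDerivAt_contourPrimitive h₁' h₂ h₂' hτ (abs_le.2 hτπ))
    ((hF₁.sub hF₂).sub herr) (h₁.tendsto_contourPrimitive h₂ s),
    intervalIntegral.integral_sub (hF₁.sub hF₂) herr, intervalIntegral.integral_sub hF₁ hF₂,
    sub_add_cancel]

theorem enorm_contourPrimitive_le (h₁ : IsStretchedLoop Y₁ Y₁' l K)
    (h₂ : IsStretchedLoop Y₂ Y₂' l K) (hτ : τ ≠ 0) (hτπ : |τ| ≤ π) :
    ‖contourPrimitive Y₁ Y₁' Y₂ Y₂' s τ‖ₑ ≤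
      ENNReal.ofReal (12 * K / l) * ‖secant (Y₁ - Y₂) s τ‖ₑ := by
  have hK := h₁.nonneg
  have hl := h₁.pos
  rw [secant_sub, ← ofReal_norm, ← ofReal_norm, ← ENNReal.ofReal_mul (by positivity)]
  refine ENNReal.ofReal_le_ofReal ((h₁.norm_contourPrimitive_le h₂ hτ hτπ).trans_eq ?_)
  ring

theorem enorm_integral_contourIntegrand_sub_le (h₁ : IsStretchedLoop Y₁ Y₁' l K)
    (h₁' : IsC1Loop Y₁' Y₁'') (h₂ : IsStretchedLoop Y₂ Y₂' l K) (h₂' : IsC1Loop Y₂' Y₂'')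
    (s : ℝ) :
    ‖(∫ τ in (-π)..π, contourIntegrand Y₁ Y₁' s τ) -
        ∫ τ in (-π)..π, contourIntegrand Y₂ Y₂' s τ‖ₑ ≤
      ENNReal.ofReal (12 * K / l) *
          (‖secant (Y₁ - Y₂) s π‖ₑ + ‖secant (Y₁ - Y₂) s (-π)‖ₑ) +
        ∫⁻ τ, ‖contourError Y₁ Y₁' Y₁'' Y₂ Y₂' Y₂'' s τ‖ₑ ∂periodMeasure := by
  have hπ : -π ≤ π := by linarith [pi_pos]
  by_cases htop : ∫⁻ τ, ‖contourError Y₁ Y₁' Y₁'' Y₂ Y₂' Y₂'' s τ‖ₑ ∂periodMeasure = ⊤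
  · simp [htop]
  have hmeas := (measurable_contourError h₁.continuous.measurable h₁.continuous_deriv.measurable
    h₁'.continuous_deriv.measurable h₂.continuous.measurable h₂.continuous_deriv.measurable
    h₂'.continuous_deriv.measurable).comp (measurable_prodMk_left (x := s))
  have herr : IntervalIntegrable (contourError Y₁ Y₁' Y₁'' Y₂ Y₂' Y₂'' s) volume (-π) π :=
    (intervalIntegrable_iff_integrableOn_Ioc_of_le hπ).2
      ⟨hmeas.aestronglyMeasurable, Ne.lt_top htop⟩
  rw [h₁.integral_contourIntegrand_sub h₁' h₂ h₂' herr, mul_add]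
  refine (enorm_add_le _ _).trans (add_le_add (enorm_sub_le.trans (add_le_add ?_ ?_)) ?_)
  · exact h₁.enorm_contourPrimitive_le h₂ pi_ne_zero (abs_of_pos pi_pos).le
  · exact h₁.enorm_contourPrimitive_le h₂ (neg_ne_zero.2 pi_ne_zero)
      (by rw [abs_neg, abs_of_pos pi_pos])
  · rw [intervalIntegral.integral_of_le hπ]
    exact enorm_integral_le_lintegral_enorm _

end IsStretchedLoop

theorem IsC1Loop.eLpNorm_secant_le {Y Y' : ℝ → ℂ} (h : IsC1Loop Y Y') {δ ε : ℝ} (hδ : 0 ≤ δ)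
    (hε₀ : 0 ≤ ε) (hε₁ : ε ≤ 1) (hτ : τ ≠ 0) :
    eLpNorm (fun s => secant Y s τ) 2 periodMeasure ≤
      2 ^ (1 - ε) * ‖τ‖ₑ ^ (ε - 1) * sobolevSeminorm (δ + ε) Y := by
  have hY := h.continuous
  have hcont := continuous_secant hY τ
  refine (eLpNorm_two_le_sobolevSeminorm (memLp_two_periodMeasure_of_continuous hcont) ?_ hδ).trans
    (sobolevSeminorm_secant_le h.periodic hY hε₀ hε₁ δ hτ)
  simp [circleCoeff_secant h.periodic hY]

theorem IsC1Loop.eLpNorm_mul_secant_le {Y Y' f : ℝ → ℂ} (h : IsC1Loop Y Y') (hf : Continuous f)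
    (hf₀ : circleCoeff f 0 = 0) {θ δ ε : ℝ} (hθ : 0 ≤ θ) (hδ : 0 ≤ δ) (hε₀ : 0 ≤ ε) (hε₁ : ε ≤ 1)
    (hτ : τ ≠ 0) :
    eLpNorm (fun s => f s * secant Y s τ) 2 periodMeasure ≤ productConst (θ + δ) *
      sobolevSeminorm θ f * (2 ^ (1 - ε) * ‖τ‖ₑ ^ (ε - 1) * sobolevSeminorm (δ + ε) Y) := by
  have hY := h.continuous
  have hcont := continuous_secant hY τ
  rw [mul_assoc]
  refine (eLpNorm_mul_le_sobolevSeminorm_mul (memLp_two_periodMeasure_of_continuous hf)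
    (memLp_two_periodMeasure_of_continuous hcont)
    (memLp_two_periodMeasure_of_continuous (hf.mul hcont)) hf₀
    (by simp [circleCoeff_secant h.periodic hY]) hθ hδ).trans ?_
  gcongr
  exact sobolevSeminorm_secant_le h.periodic hY hε₀ hε₁ δ hτ

theorem IsC1Loop.eLpNorm_secantDeriv_add_mul_secant_le {Y Y' Y'' Z Z' : ℝ → ℂ}
    (h : IsC1Loop Y Y') (h' : IsC1Loop Y' Y'') (hZ : IsC1Loop Z Z') {θ δ ε : ℝ} (hθ : 0 ≤ θ)
    (hδ : 0 ≤ δ) (hε₀ : 0 ≤ ε) (hε₁ : ε ≤ 1) (hτ : τ ≠ 0) :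
    eLpNorm (fun s => (‖secantDeriv Y Y' s τ‖ + ‖Y'' (s + τ)‖) * ‖secant Z s τ‖) 2 periodMeasure ≤
      productConst (θ + δ) * (3 * sobolevSeminorm (θ + 2) Y) *
        (2 ^ (1 - ε) * ‖τ‖ₑ ^ (ε - 1) * sobolevSeminorm (δ + ε) Z) := by
  set D := 2 ^ (1 - ε) * ‖τ‖ₑ ^ (ε - 1) * sobolevSeminorm (δ + ε) Z
  have hp := continuous_secantDeriv h.continuous h.continuous_deriv τ
  have hM : Continuous fun s => Y'' (s + τ) := by
    have := h'.continuous_deriv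
    fun_prop
  have hd := continuous_secant hZ.continuous τ
  have hp_le := hZ.eLpNorm_mul_secant_le hp (by simp [circleCoeff_secantDeriv h hτ]) hθ hδ hε₀ hε₁
    hτ
  have hM_le := hZ.eLpNorm_mul_secant_le hM
    (by simp [circleCoeff_comp_add h'.periodic_deriv, circleCoeff_deriv h']) hθ hδ hε₀ hε₁ hτ
  have hM_seminorm : sobolevSeminorm θ (fun s => Y'' (s + τ)) ≤ sobolevSeminorm (θ + 2) Y := by
    rw [sobolevSeminorm_comp_add h'.periodic_deriv, ← one_add_one_eq_two, ← add_assoc]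
    exact (sobolevSeminorm_deriv_le h' θ).trans (sobolevSeminorm_deriv_le h (θ + 1))
  simp only [add_mul, ← norm_mul]
  refine (eLpNorm_add_le (hp.mul hd).norm.aestronglyMeasurable
    (hM.mul hd).norm.aestronglyMeasurable one_le_two).trans ?_
  rw [eLpNorm_norm, eLpNorm_norm]
  calc _ ≤ productConst (θ + δ) * (2 * sobolevSeminorm (θ + 2) Y) * D +
        productConst (θ + δ) * sobolevSeminorm (θ + 2) Y * D := by
        refine add_le_add (hp_le.trans ?_) (hM_le.trans ?_)
        · gcongr
          exact sobolevSeminorm_secantDeriv_le h θ hτ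
        · gcongr
    _ = _ := by ring

theorem IsStretchedLoop.eLpNorm_contourError_le (h₁ : IsStretchedLoop Y₁ Y₁' l K)
    (h₁' : IsC1Loop Y₁' Y₁'') (h₂ : IsStretchedLoop Y₂ Y₂' l K) (h₂' : IsC1Loop Y₂' Y₂'')
    {θ δ ε : ℝ} (hθ : 0 ≤ θ) (hδ : 0 ≤ δ) (hε₀ : 0 ≤ ε) (hε₁ : ε ≤ 1)
    (hN₁ : sobolevSeminorm (θ + 2) Y₁ ≤ ENNReal.ofReal K)
    (hN₂ : sobolevSeminorm (θ + 2) Y₂ ≤ ENNReal.ofReal K) (hτ : τ ≠ 0) (hτπ : |τ| ≤ π) :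
    eLpNorm (fun s => contourError Y₁ Y₁' Y₁'' Y₂ Y₂' Y₂'' s τ) 2 periodMeasure ≤
      (ENNReal.ofReal (36 * K / l ^ 2) * (productConst (θ + δ) * (6 * ENNReal.ofReal K)) + 1) *
        (2 ^ (1 - ε) * ‖τ‖ₑ ^ (ε - 1) * sobolevSeminorm (δ + ε) (Y₁ - Y₂)) := by
  have hl := h₁.pos
  have hK := h₁.nonneg
  have hZ := h₁.toIsC1Loop.sub h₂.toIsC1Loop
  set D := 2 ^ (1 - ε) * ‖τ‖ₑ ^ (ε - 1) * sobolevSeminorm (δ + ε) (Y₁ - Y₂)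
  have hd := (continuous_secant hZ.continuous τ).norm
  have hmeas {Y Y' Y'' : ℝ → ℂ} (h : IsC1Loop Y Y') (h' : IsC1Loop Y' Y'') :
      AEStronglyMeasurable (fun s => (‖secantDeriv Y Y' s τ‖ + ‖Y'' (s + τ)‖) *
        ‖secant (Y₁ - Y₂) s τ‖) periodMeasure := by
    have hp := (continuous_secantDeriv h.continuous h.continuous_deriv τ).norm
    have hM : Continuous fun s => ‖Y'' (s + τ)‖ := by
      have := h'.continuous_deriv
      fun_prop
    exact ((hp.add hM).mul hd).aestronglyMeasurable
  refine (eLpNorm_le_mul_add_add one_le_two (c := 36 * K / l ^ 2) (by positivity) (fun s => ?_)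
    (hmeas h₁.toIsC1Loop h₁') (hmeas h₂.toIsC1Loop h₂') hd.aestronglyMeasurable).trans ?_
  · refine (h₁.norm_contourError_le h₂ hτ hτπ).trans_eq ?_
    rw [secant_sub]
    ring
  · rw [eLpNorm_norm]
    calc _ ≤ ENNReal.ofReal (36 * K / l ^ 2) *
          (productConst (θ + δ) * (3 * ENNReal.ofReal K) * D +
            productConst (θ + δ) * (3 * ENNReal.ofReal K) * D) + D := by
          gcongr
          · exact (h₁.eLpNorm_secantDeriv_add_mul_secant_le h₁' hZ hθ hδ hε₀ hε₁ hτ).trans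
              (by gcongr)
          · exact (h₂.eLpNorm_secantDeriv_add_mul_secant_le h₂' hZ hθ hδ hε₀ hε₁ hτ).trans
              (by gcongr)
          · exact hZ.eLpNorm_secant_le hδ hε₀ hε₁ hτ
      _ = _ := by ring

/-- The integral of `|τ|^(ε-1)` over one period. -/
def singularMass (ε : ℝ) : ℝ≥0∞ := ∫⁻ τ, ‖τ‖ₑ ^ (ε - 1) ∂periodMeasure

theorem singularMass_ne_top {ε : ℝ} (hε : 0 < ε) : singularMass ε ≠ ⊤ := by
  have hint := (intervalIntegrable_iff_integrableOn_Ioc_of_le (by linarith [pi_pos])).1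
    (intervalIntegrable_abs_rpow (r := ε - 1) (by linarith) π)
  refine ne_of_eq_of_ne (lintegral_congr_ae ?_) hint.hasFiniteIntegral.ne
  filter_upwards [Measure.ae_ne _ 0] with τ hτ
  have habs_pos := abs_pos.2 hτ
  rw [Real.enorm_eq_ofReal_abs τ, ENNReal.ofReal_rpow_of_pos habs_pos,
    Real.enorm_of_nonneg (rpow_nonneg habs_pos.le _)]

/-- The constant in the `L²` estimate of `g_{Y₁} - g_{Y₂}` by the `Ḣ^(δ+ε)` seminorm of `Y₁ - Y₂`,
for curves in `Ḣ^(2+θ)`, in complex notation. -/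
def contourConst (θ δ ε : ℝ) : ℝ≥0∞ :=
  48 * 2 ^ (1 - ε) * ‖π‖ₑ ^ (ε - 1) +
    (216 * productConst (θ + δ) + 4) * 2 ^ (1 - ε) * singularMass ε

theorem contourConst_ne_zero {θ δ ε : ℝ} : contourConst θ δ ε ≠ 0 := by
  simp [contourConst, ENNReal.rpow_eq_zero_iff, pi_ne_zero]

theorem contourConst_ne_top {θ δ ε : ℝ} (hθδ : 1 / 2 < θ + δ) (hε : 0 < ε) :
    contourConst θ δ ε ≠ ⊤ := by
  have hpow : (2 : ℝ≥0∞) ^ (1 - ε) ≠ ⊤ := by simp [ENNReal.rpow_eq_top_iff]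
  have hπ : ‖π‖ₑ ^ (ε - 1) ≠ ⊤ := by simp [ENNReal.rpow_eq_top_iff, pi_ne_zero]
  have := productConst_ne_top hθδ
  have := singularMass_ne_top hε
  unfold contourConst
  finiteness

theorem IsStretchedLoop.lintegral_eLpNorm_contourError_le (h₁ : IsStretchedLoop Y₁ Y₁' l K)
    (h₁' : IsC1Loop Y₁' Y₁'') (h₂ : IsStretchedLoop Y₂ Y₂' l K) (h₂' : IsC1Loop Y₂' Y₂'')
    {θ δ ε : ℝ} (hθ : 0 ≤ θ) (hδ : 0 ≤ δ) (hε₀ : 0 ≤ ε) (hε₁ : ε ≤ 1)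
    (hN₁ : sobolevSeminorm (θ + 2) Y₁ ≤ ENNReal.ofReal K)
    (hN₂ : sobolevSeminorm (θ + 2) Y₂ ≤ ENNReal.ofReal K) :
    ∫⁻ τ, eLpNorm (fun s => contourError Y₁ Y₁' Y₁'' Y₂ Y₂' Y₂'' s τ) 2 periodMeasure
        ∂periodMeasure ≤
      (216 * productConst (θ + δ) + 4) * 2 ^ (1 - ε) * singularMass ε *
        (ENNReal.ofReal (K ^ 2 / l ^ 2) * sobolevSeminorm (δ + ε) (Y₁ - Y₂)) := by
  have hl := h₁.pos
  have hK := h₁.nonneg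
  have hmain : ENNReal.ofReal (36 * K / l ^ 2) * (6 * ENNReal.ofReal K) =
      216 * ENNReal.ofReal (K ^ 2 / l ^ 2) := by
    rw [← ENNReal.ofReal_ofNat 6, ← ENNReal.ofReal_ofNat 216, ← ENNReal.ofReal_mul (by norm_num),
      ← ENNReal.ofReal_mul (by positivity), ← ENNReal.ofReal_mul (by norm_num)]
    ring_nf
  have hone : 1 ≤ 4 * ENNReal.ofReal (K ^ 2 / l ^ 2) := by
    rw [← ENNReal.ofReal_ofNat 4, ← ENNReal.ofReal_mul (by norm_num), ENNReal.one_le_ofReal,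
      ← mul_div_assoc, one_le_div (by positivity)]
    nlinarith [h₁.le_two_mul]
  have hτ : ∀ᵐ τ ∂periodMeasure, eLpNorm (fun s => contourError Y₁ Y₁' Y₁'' Y₂ Y₂' Y₂'' s τ) 2
      periodMeasure ≤ (216 * productConst (θ + δ) + 4) * 2 ^ (1 - ε) *
        (ENNReal.ofReal (K ^ 2 / l ^ 2) * sobolevSeminorm (δ + ε) (Y₁ - Y₂)) * ‖τ‖ₑ ^ (ε - 1) := by
    filter_upwards [Measure.ae_ne _ 0, ae_restrict_mem measurableSet_Ioc] with τ hτ hτπ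
    refine (h₁.eLpNorm_contourError_le h₁' h₂ h₂' hθ hδ hε₀ hε₁ hN₁ hN₂ hτ
      (abs_le.2 ⟨hτπ.1.le, hτπ.2⟩)).trans ?_
    rw [mul_left_comm (ENNReal.ofReal _) (productConst _), hmain]
    calc _ ≤ (productConst (θ + δ) * (216 * ENNReal.ofReal (K ^ 2 / l ^ 2)) +
          4 * ENNReal.ofReal (K ^ 2 / l ^ 2)) *
            (2 ^ (1 - ε) * ‖τ‖ₑ ^ (ε - 1) * sobolevSeminorm (δ + ε) (Y₁ - Y₂)) := by gcongr
      _ = _ := by ring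
  refine (lintegral_mono_ae hτ).trans_eq ?_
  rw [lintegral_const_mul _ (by fun_prop), ← singularMass]
  ring

theorem IsC1Loop.eLpNorm_enorm_secant_add_enorm_secant_le {Y Y' : ℝ → ℂ} (h : IsC1Loop Y Y')
    {δ ε : ℝ} (hδ : 0 ≤ δ) (hε₀ : 0 ≤ ε) (hε₁ : ε ≤ 1) (hτ : τ ≠ 0) :
    eLpNorm (fun s => ‖secant Y s τ‖ₑ + ‖secant Y s (-τ)‖ₑ) 2 periodMeasure ≤
      2 * (2 ^ (1 - ε) * ‖τ‖ₑ ^ (ε - 1) * sobolevSeminorm (δ + ε) Y) := by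
  have hright := continuous_secant h.continuous τ
  have hleft := continuous_secant h.continuous (-τ)
  refine (eLpNorm_add_le hright.enorm.aestronglyMeasurable hleft.enorm.aestronglyMeasurable
    one_le_two).trans ?_
  rw [eLpNorm_enorm, eLpNorm_enorm, two_mul]
  refine add_le_add (h.eLpNorm_secant_le hδ hε₀ hε₁ hτ) ?_
  simpa only [enorm_neg] using h.eLpNorm_secant_le hδ hε₀ hε₁ (neg_ne_zero.2 hτ)

theorem IsStretchedLoop.eLpNorm_integral_contourIntegrand_sub_le_of_isC1Loop
    (h₁ : IsStretchedLoop Y₁ Y₁' l K) (h₁' : IsC1Loop Y₁' Y₁'')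
    (h₂ : IsStretchedLoop Y₂ Y₂' l K) (h₂' : IsC1Loop Y₂' Y₂'')
    {θ δ ε : ℝ} (hθ : 0 ≤ θ) (hδ : 0 ≤ δ) (hε₀ : 0 ≤ ε) (hε₁ : ε ≤ 1)
    (hN₁ : sobolevSeminorm (θ + 2) Y₁ ≤ ENNReal.ofReal K)
    (hN₂ : sobolevSeminorm (θ + 2) Y₂ ≤ ENNReal.ofReal K) :
    eLpNorm (fun s => (∫ τ in (-π)..π, contourIntegrand Y₁ Y₁' s τ) -
        ∫ τ in (-π)..π, contourIntegrand Y₂ Y₂' s τ) 2 periodMeasure ≤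
      contourConst θ δ ε *
        (ENNReal.ofReal (K ^ 2 / l ^ 2) * sobolevSeminorm (δ + ε) (Y₁ - Y₂)) := by
  have hl := h₁.pos
  have hK := h₁.nonneg
  have hZ := h₁.toIsC1Loop.sub h₂.toIsC1Loop
  set ends : ℝ → ℝ≥0∞ := fun s => ‖secant (Y₁ - Y₂) s π‖ₑ + ‖secant (Y₁ - Y₂) s (-π)‖ₑ
  have hends : Measurable ends :=
    ((continuous_secant hZ.continuous π).enorm.add
      (continuous_secant hZ.continuous (-π)).enorm).measurable
  have herror := (measurable_contourError h₁.continuous.measurable h₁.continuous_deriv.measurable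
    h₁'.continuous_deriv.measurable h₂.continuous.measurable h₂.continuous_deriv.measurable
    h₂'.continuous_deriv.measurable).enorm
  have hcoeff : ENNReal.ofReal (12 * K / l) ≤ 24 * ENNReal.ofReal (K ^ 2 / l ^ 2) := by
    rw [← ENNReal.ofReal_ofNat 24, ← ENNReal.ofReal_mul (by norm_num)]
    refine ENNReal.ofReal_le_ofReal ?_
    rw [← mul_div_assoc, div_le_div_iff₀ hl (by positivity)]
    nlinarith [mul_le_mul_of_nonneg_left h₁.le_two_mul (mul_nonneg hK hl.le)]
  calc _ ≤ eLpNorm (fun s => ENNReal.ofReal (12 * K / l) * ends s +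
          ∫⁻ τ, ‖contourError Y₁ Y₁' Y₁'' Y₂ Y₂' Y₂'' s τ‖ₑ ∂periodMeasure) 2 periodMeasure :=
        eLpNorm_mono_enorm (h₁.enorm_integral_contourIntegrand_sub_le h₁' h₂ h₂')
    _ ≤ ENNReal.ofReal (12 * K / l) * eLpNorm ends 2 periodMeasure +
          ∫⁻ τ, eLpNorm (fun s => contourError Y₁ Y₁' Y₁'' Y₂ Y₂' Y₂'' s τ) 2 periodMeasure
            ∂periodMeasure := by
        refine (eLpNorm_add_le (hends.const_mul _).aestronglyMeasurable
          herror.lintegral_prod_right'.aestronglyMeasurable one_le_two).trans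
          (add_le_add ?_ ?_)
        · exact eLpNorm_le_nnreal_smul_eLpNorm_of_ae_le_mul'
            (Eventually.of_forall fun s => le_rfl) 2
        · simpa only [eLpNorm_enorm] using eLpNorm_two_lintegral_le
            (G := fun s τ => ‖contourError Y₁ Y₁' Y₁'' Y₂ Y₂' Y₂'' s τ‖ₑ) herror
    _ ≤ _ := add_le_add (mul_le_mul' hcoeff
          (hZ.eLpNorm_enorm_secant_add_enorm_secant_le hδ hε₀ hε₁ pi_ne_zero))
          (h₁.lintegral_eLpNorm_contourError_le h₁' h₂ h₂' hθ hδ hε₀ hε₁ hN₁ hN₂)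
    _ = _ := by
        rw [contourConst]
        ring

end DifferenceEstimate

/-! ### Approximation by Steklov averages -/

section Steklov

variable {E : Type*} [NormedAddCommGroup E] [NormedSpace ℝ E] {Y Y' : ℝ → E} {K l : ℝ}

/-- The Steklov average of `Y` over windows of length `r`, used to approximate a `C¹` curve by `C²`
curves without increasing its Sobolev seminorms. -/
def steklovAverage (Y : ℝ → E) (r s : ℝ) : E := r⁻¹ • ∫ x in s..s + r, Y x

theorem steklovAverage_sub {Y₁ Y₂ : ℝ → E} (h₁ : Continuous Y₁) (h₂ : Continuous Y₂) (r : ℝ) :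
    steklovAverage (Y₁ - Y₂) r = steklovAverage Y₁ r - steklovAverage Y₂ r := by
  funext s
  simp only [steklovAverage, Pi.sub_apply, ← smul_sub]
  rw [intervalIntegral.integral_sub (h₁.intervalIntegrable _ _) (h₂.intervalIntegrable _ _)]

theorem steklovAverage_eq_secant (hY : Continuous Y) (r s : ℝ) :
    steklovAverage Y r s = secant (fun t => ∫ x in (0 : ℝ)..t, Y x) s r := by
  rw [steklovAverage, secant, intervalIntegral.integral_interval_sub_left]
  all_goals exact hY.intervalIntegrable _ _

theorem IsC1Loop.isC1Loop_secant (h : IsC1Loop Y Y') (τ : ℝ) :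
    IsC1Loop (fun s => secant Y s τ) (fun s => secant Y' s τ) where
  periodic s := by
    simp only [secant]
    rw [add_right_comm, h.periodic, h.periodic]
  hasDerivAt s := (((h.hasDerivAt (s + τ)).comp_add_const s τ).sub (h.hasDerivAt s)).const_smul τ⁻¹
  continuous_deriv := continuous_secant h.continuous_deriv τ

theorem IsC1Loop.isC1Loop_steklovAverage [CompleteSpace E] (h : IsC1Loop Y Y') (r : ℝ) :
    IsC1Loop (steklovAverage Y r) (fun s => secant Y s r) where
  periodic s := by
    have := intervalIntegral.integral_comp_add_right (a := s) (b := s + r) Y (2 * π)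
    simp only [h.periodic _] at this
    rw [steklovAverage, steklovAverage, this, add_right_comm]
  hasDerivAt s := by
    have hprim (t : ℝ) : HasDerivAt (fun t => ∫ x in (0 : ℝ)..t, Y x) (Y t) t :=
      h.continuous.integral_hasStrictDerivAt 0 t |>.hasDerivAt
    rw [funext (steklovAverage_eq_secant h.continuous r)]
    exact (((hprim (s + r)).comp_add_const s r).sub (hprim s)).const_smul r⁻¹
  continuous_deriv := continuous_secant h.continuous r

theorem IsC1Loop.tendsto_steklovAverage [CompleteSpace E] (h : IsC1Loop Y Y') (s : ℝ) :
    Tendsto (fun r => steklovAverage Y r s) (𝓝[≠] 0) (𝓝 (Y s)) := by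
  simp only [steklovAverage_eq_secant h.continuous, secant]
  exact hasDerivAt_iff_tendsto_slope_zero.1 (h.continuous.integral_hasStrictDerivAt 0 s).hasDerivAt

theorem IsC1Loop.halfHolder_secant (h : IsC1Loop Y Y') (hH : HalfHolder Y' K) {τ : ℝ}
    (hτ : τ ≠ 0) : HalfHolder (fun s => secant Y s τ) K := by
  intro a b hab
  have hmvt := convex_univ.norm_image_sub_le_of_norm_hasDerivWithin_le (x := 0) (y := τ)
    (f := fun t => Y (a + t) - Y (b + t)) (C := K * √|a - b|)
    (fun t _ => (((h.hasDerivAt (a + t)).comp_const_add a t).sub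
      ((h.hasDerivAt (b + t)).comp_const_add b t)).hasDerivWithinAt)
    (fun t _ => by simpa using hH (a + t) (b + t) (by simpa using hab)) trivial trivial
  have hsub : secant Y a τ - secant Y b τ =
      τ⁻¹ • (Y (a + τ) - Y (b + τ) - (Y (a + 0) - Y (b + 0))) := by
    simp only [secant, add_zero]
    module
  rw [sub_zero, Real.norm_eq_abs] at hmvt
  rwa [hsub, norm_smul, norm_inv, Real.norm_eq_abs, inv_mul_le_iff₀ (abs_pos.2 hτ), mul_comm]

theorem IsC1Loop.norm_secant_sub_le (h : IsC1Loop Y Y') (hH : HalfHolder Y' K) (hK : 0 ≤ K)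
    {τ : ℝ} (hτ : τ ≠ 0) (hτπ : |τ| ≤ π) (s : ℝ) : ‖secant Y s τ - Y' s‖ ≤ K * √|τ| := by
  have happrox := h.norm_sub_sub_smul_le hH hK (a := s) (b := s + τ) (by simpa using hτπ)
    Set.left_mem_uIcc
  rw [add_sub_cancel_left] at happrox
  have hsub : secant Y s τ - Y' s = τ⁻¹ • (Y (s + τ) - Y s - τ • Y' s) := by
    rw [smul_sub, inv_smul_smul₀ hτ, secant]
  rwa [hsub, norm_smul, norm_inv, Real.norm_eq_abs, inv_mul_le_iff₀ (abs_pos.2 hτ), mul_comm]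

theorem IsStretchedLoop.wellStretched_steklovAverage [CompleteSpace E]
    (h : IsStretchedLoop Y Y' l K) {r : ℝ} (hr : r ≠ 0) (hrπ : |r| ≤ π) (hrl : K * √|r| ≤ l / 2) :
    WellStretched (steklovAverage Y r) (l / 2) := by
  intro a b hab
  have hmvt := convex_univ.norm_image_sub_le_of_norm_hasDerivWithin_le (x := b) (y := a)
    (f := fun s => steklovAverage Y r s - Y s) (C := l / 2)
    (fun x _ => (((h.isC1Loop_steklovAverage r).hasDerivAt x).sub
      (h.hasDerivAt x)).hasDerivWithinAt)
    (fun x _ => (h.norm_secant_sub_le h.halfHolder h.nonneg hr hrπ x).trans hrl) trivial trivial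
  rw [Real.norm_eq_abs] at hmvt
  have htri := norm_sub_le (steklovAverage Y r a - steklovAverage Y r b)
    (steklovAverage Y r a - Y a - (steklovAverage Y r b - Y b))
  rw [show steklovAverage Y r a - steklovAverage Y r b -
    (steklovAverage Y r a - Y a - (steklovAverage Y r b - Y b)) = Y a - Y b by abel] at htri
  linarith [h.wellStretched a b hab]

theorem IsStretchedLoop.eventually_isStretchedLoop_steklovAverage [CompleteSpace E]
    (h : IsStretchedLoop Y Y' l K) : ∀ᶠ r in 𝓝[≠] 0,
      IsStretchedLoop (steklovAverage Y r) (fun s => secant Y s r) (l / 2) K := by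
  have hsqrt : ∀ᶠ r : ℝ in 𝓝 0, K * √|r| < l / 2 :=
    ContinuousAt.eventually_lt (by fun_prop) continuousAt_const (by simpa using h.pos)
  filter_upwards [self_mem_nhdsWithin, nhdsWithin_le_nhds hsqrt,
    nhdsWithin_le_nhds (Metric.closedBall_mem_nhds (0 : ℝ) pi_pos)] with r hr hrl hrπ
  exact
    { h.isC1Loop_steklovAverage r with
      pos := half_pos h.pos
      wellStretched := h.wellStretched_steklovAverage hr (by simpa using hrπ) hrl.le
      halfHolder := h.halfHolder_secant h.halfHolder hr }

end Steklov

section Approximation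

variable {Y Y' Y'' Y₁ Y₁' Y₂ Y₂' : ℝ → ℂ} {K l θ : ℝ}

theorem IsC1Loop.sobolevSeminorm_steklovAverage_le (h : IsC1Loop Y Y') {r : ℝ} (hr : r ≠ 0)
    (σ : ℝ) : sobolevSeminorm σ (steklovAverage Y r) ≤ sobolevSeminorm σ Y := by
  suffices hle : ∀ k : ℤ, k ≠ 0 → ‖circleCoeff (steklovAverage Y r) k‖ ≤ ‖circleCoeff Y k‖ by
    simpa using sobolevSeminorm_le_mul (ρ := 0) 1 σ fun k hk => by
      simpa [intWeight_of_ne_zero _ hk, ← ofReal_norm] using ENNReal.ofReal_le_ofReal (hle k hk)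
  intro k hk
  have hcoeff := circleCoeff_deriv (h.isC1Loop_steklovAverage r) k
  rw [circleCoeff_secant h.periodic h.continuous] at hcoeff
  have hnorm := congrArg norm hcoeff
  have hexp := Real.norm_exp_I_mul_ofReal_sub_one_le (x := k * r)
  have hk' : 0 < |(k : ℝ)| := abs_pos.2 (mod_cast hk)
  simp only [norm_mul, norm_inv, Complex.norm_real, Complex.norm_I, one_mul, Complex.norm_intCast,
    Real.norm_eq_abs] at hnorm
  rw [Real.norm_eq_abs, abs_mul, ← div_le_iff₀ (abs_pos.2 hr)] at hexp
  refine le_of_mul_le_mul_left ?_ hk'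
  rw [← hnorm, ← mul_assoc, inv_mul_eq_div]
  gcongr

theorem IsC1Loop.halfHolder_deriv_of_isC1Loop (h : IsC1Loop Y Y') (h' : IsC1Loop Y' Y'')
    (hθ : 0 ≤ θ) (hK : 0 ≤ K) (hN : sobolevSeminorm (θ + 2) Y ≤ ENNReal.ofReal K) :
    HalfHolder Y' K := by
  rw [← one_add_one_eq_two, ← add_assoc] at hN
  refine h'.halfHolder hK (le_trans ?_ hN)
  calc eLpNorm Y'' 2 periodMeasure ≤ sobolevSeminorm θ Y'' :=
        eLpNorm_two_le_sobolevSeminorm (memLp_two_periodMeasure_of_continuous h'.continuous_deriv)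
          (by simp [circleCoeff_deriv h']) hθ
    _ ≤ sobolevSeminorm (θ + 1) Y' := sobolevSeminorm_deriv_le h' θ
    _ ≤ sobolevSeminorm (θ + 1 + 1) Y := sobolevSeminorm_deriv_le h (θ + 1)

theorem IsC1Loop.halfHolder_deriv (h : IsC1Loop Y Y') (hθ : 0 ≤ θ) (hK : 0 ≤ K)
    (hN : sobolevSeminorm (θ + 2) Y ≤ ENNReal.ofReal K) : HalfHolder Y' K := by
  intro a b hab
  refine le_of_tendsto ((h.tendsto_secant a).sub (h.tendsto_secant b)).norm ?_
  filter_upwards [self_mem_nhdsWithin] with r hr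
  exact (h.isC1Loop_steklovAverage r).halfHolder_deriv_of_isC1Loop (h.isC1Loop_secant r) hθ hK
    ((h.sobolevSeminorm_steklovAverage_le hr _).trans hN) a b hab

theorem IsStretchedLoop.tendsto_contourIntegrand_steklovAverage (h : IsStretchedLoop Y Y' l K)
    {s τ : ℝ} (hτ : τ ≠ 0) (hτπ : |τ| ≤ π) :
    Tendsto (fun r => contourIntegrand (steklovAverage Y r) (fun s => secant Y s r) s τ) (𝓝[≠] 0)
      (𝓝 (contourIntegrand Y Y' s τ)) := by
  have ha : Tendsto (fun r => secant (steklovAverage Y r) s τ) (𝓝[≠] 0) (𝓝 (secant Y s τ)) :=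
    ((h.tendsto_steklovAverage (s + τ)).sub (h.tendsto_steklovAverage s)).const_smul τ⁻¹
  have hp : Tendsto (fun r => secantDeriv (steklovAverage Y r) (fun s => secant Y s r) s τ)
      (𝓝[≠] 0) (𝓝 (secantDeriv Y Y' s τ)) :=
    ((h.tendsto_secant (s + τ)).sub ha).const_smul τ⁻¹
  have hne : secant Y s τ ≠ 0 :=
    norm_pos_iff.1 (h.pos.trans_le (h.wellStretched.le_norm_secant hτ hτπ))
  have hconj {f : ℝ → ℂ} {z : ℂ} (hf : Tendsto f (𝓝[≠] 0) (𝓝 z)) :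
      Tendsto (fun r => conj (f r)) (𝓝[≠] 0) (𝓝 (conj z)) :=
    (Complex.continuous_conj.tendsto z).comp hf
  have hslope : Tendsto (fun r => slopeTerm τ (secant (steklovAverage Y r) s τ)
      (secantDeriv (steklovAverage Y r) (fun s => secant Y s r) s τ)) (𝓝[≠] 0)
      (𝓝 (slopeTerm τ (secant Y s τ) (secantDeriv Y Y' s τ))) :=
    hp.add (((hp.pow 2).const_mul _).div (ha.const_mul 2) (mul_ne_zero two_ne_zero hne))
  exact (hslope.add ((ha.div (hconj ha) (by simpa using hne)).mul (hconj hslope))).add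
    (ha.const_mul _)

theorem IsStretchedLoop.tendsto_integral_contourIntegrand_steklovAverage
    (h : IsStretchedLoop Y Y' l K) (s : ℝ) :
    Tendsto (fun r => ∫ τ in (-π)..π,
        contourIntegrand (steklovAverage Y r) (fun s => secant Y s r) s τ) (𝓝[≠] 0)
      (𝓝 (∫ τ in (-π)..π, contourIntegrand Y Y' s τ)) := by
  have hae {p : ℝ → Prop} (hp : ∀ τ, τ ≠ 0 → |τ| ≤ π → p τ) :
      ∀ᵐ τ, τ ∈ Set.uIoc (-π) π → p τ := by
    rw [Set.uIoc_of_le (by linarith [pi_pos])]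
    filter_upwards [Measure.ae_ne volume 0] with τ hτ hτπ
    exact hp τ hτ (abs_le.2 ⟨hτπ.1.le, hτπ.2⟩)
  refine intervalIntegral.tendsto_integral_filter_of_dominated_convergence _ ?_ ?_
    (intervalIntegrable_contourBound K (l / 2))
    (hae fun τ hτ hτπ => h.tendsto_contourIntegrand_steklovAverage hτ hτπ)
  · refine .of_forall fun r => ?_
    have hr := h.isC1Loop_steklovAverage r
    exact ((measurable_contourIntegrand hr.continuous.measurable
      hr.continuous_deriv.measurable).comp measurable_prodMk_left).aestronglyMeasurable
  · filter_upwards [h.eventually_isStretchedLoop_steklovAverage] with r hr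
    exact hae fun τ hτ hτπ => hr.norm_contourIntegrand_le hτ hτπ

theorem IsC1Loop.measurable_integral_contourIntegrand (h : IsC1Loop Y Y') :
    Measurable fun s => ∫ τ in (-π)..π, contourIntegrand Y Y' s τ := by
  simp only [intervalIntegral.integral_of_le (show -π ≤ π by linarith [pi_pos])]
  exact (measurable_contourIntegrand h.continuous.measurable
    h.continuous_deriv.measurable).stronglyMeasurable.integral_prod_right'.measurable

theorem IsStretchedLoop.eLpNorm_integral_contourIntegrand_sub_le (h₁ : IsStretchedLoop Y₁ Y₁' l K)
    (h₂ : IsStretchedLoop Y₂ Y₂' l K) {δ ε : ℝ} (hθ : 0 ≤ θ) (hδ : 0 ≤ δ) (hε₀ : 0 ≤ ε)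
    (hε₁ : ε ≤ 1) (hN₁ : sobolevSeminorm (θ + 2) Y₁ ≤ ENNReal.ofReal K)
    (hN₂ : sobolevSeminorm (θ + 2) Y₂ ≤ ENNReal.ofReal K) :
    eLpNorm (fun s => (∫ τ in (-π)..π, contourIntegrand Y₁ Y₁' s τ) -
        ∫ τ in (-π)..π, contourIntegrand Y₂ Y₂' s τ) 2 periodMeasure ≤
      contourConst θ δ ε *
        (ENNReal.ofReal (K ^ 2 / (l / 2) ^ 2) * sobolevSeminorm (δ + ε) (Y₁ - Y₂)) := by
  refine Lp.eLpNorm_le_of_ae_tendsto (u := 𝓝[≠] (0 : ℝ)) ?_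
    (fun r => ((h₁.isC1Loop_steklovAverage r).measurable_integral_contourIntegrand.sub
      (h₂.isC1Loop_steklovAverage r).measurable_integral_contourIntegrand).aestronglyMeasurable)
    (.of_forall fun s => (h₁.tendsto_integral_contourIntegrand_steklovAverage s).sub
      (h₂.tendsto_integral_contourIntegrand_steklovAverage s))
  filter_upwards [self_mem_nhdsWithin, h₁.eventually_isStretchedLoop_steklovAverage,
    h₂.eventually_isStretchedLoop_steklovAverage] with r hr hr₁ hr₂
  refine (hr₁.eLpNorm_integral_contourIntegrand_sub_le_of_isC1Loop (h₁.isC1Loop_secant r) hr₂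
    (h₂.isC1Loop_secant r) hθ hδ hε₀ hε₁
    ((h₁.sobolevSeminorm_steklovAverage_le hr _).trans hN₁)
    ((h₂.sobolevSeminorm_steklovAverage_le hr _).trans hN₂)).trans ?_
  rw [← steklovAverage_sub h₁.continuous h₂.continuous]
  gcongr
  exact (h₁.toIsC1Loop.sub h₂.toIsC1Loop).sobolevSeminorm_steklovAverage_le hr _

end Approximation

/-! ### Curves in the plane -/

/-- The isometric identification `(x, y) ↦ x + i y` of the plane of the curves with `ℂ`. -/
def planeToComplex : E2 ≃ₗᵢ[ℝ] ℂ := Complex.orthonormalBasisOneI.repr.symm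

theorem planeToComplex_apply (v : E2) : planeToComplex v = v 0 + v 1 * Complex.I := by
  simp [planeToComplex]

section PlaneCurve

variable {E F : Type*} [NormedAddCommGroup E] [NormedSpace ℝ E] [NormedAddCommGroup F]
  [NormedSpace ℝ F] {Y Y' : ℝ → E}

theorem IsC1Loop.continuousLinearMap_comp (h : IsC1Loop Y Y') (Φ : E →L[ℝ] F) :
    IsC1Loop (Φ ∘ Y) (Φ ∘ Y') where
  periodic := h.periodic.comp Φ
  hasDerivAt s := Φ.hasFDerivAt.comp_hasDerivAt s (h.hasDerivAt s)
  continuous_deriv := Φ.continuous.comp h.continuous_deriv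

theorem WellStretched.linearIsometry_comp {l : ℝ} (h : WellStretched Y l) (Φ : E →ₗᵢ[ℝ] F) :
    WellStretched (Φ ∘ Y) l := fun a b hab => by
  simpa only [Function.comp_apply, ← map_sub, Φ.norm_map] using h a b hab

theorem secant_linearMap_comp (Φ : E →ₗ[ℝ] F) (Y : ℝ → E) (s τ : ℝ) :
    secant (Φ ∘ Y) s τ = Φ (secant Y s τ) := by
  simp only [secant, Function.comp_apply, map_smul, map_sub]

end PlaneCurve

section PlaneIntegrand

theorem ofReal_mul_eq_remainderIntegrand {a p : ℂ} (ha : a ≠ 0) {τ : ℝ} (hτ : τ ≠ 0) :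
    (((-‖a + τ * p‖ ^ 2 / ‖a‖ ^ 2 + 2 * ⟪a, a + τ * p⟫ ^ 2 / ‖a‖ ^ 4 - 1) / τ + cscKernel τ : ℝ) :
      ℂ) * a = remainderIntegrand τ a p := by
  have ha' : conj a ≠ 0 := by simpa using ha
  have hτ' : (τ : ℂ) ≠ 0 := mod_cast hτ
  have hnorm (z : ℂ) : (‖z‖ : ℂ) ^ 2 = z * conj z := (Complex.mul_conj' z).symm
  have hnorm₄ : (‖a‖ : ℂ) ^ 4 = (a * conj a) ^ 2 := by rw [← hnorm]; ring
  have hinner (z : ℂ) : ((⟪a, z⟫ : ℝ) : ℂ) = (conj a * z + a * conj z) / 2 := by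
    rw [Complex.inner, Complex.re_eq_add_conj]
    simp only [map_mul, Complex.conj_conj]
    ring
  push_cast
  rw [hnorm, hnorm, hnorm₄, hinner]
  simp only [remainderIntegrand, twiceProj, slopeTerm, map_add, map_mul, map_div₀, map_pow,
    Complex.conj_ofReal, map_ofNat]
  field_simp
  ring

variable {Y Y' : ℝ → E2} {l : ℝ}

theorem planeToComplex_smul_secant (hl : 0 < l) (hY : WellStretched Y l) {s τ : ℝ} (hτ : τ ≠ 0)
    (hτπ : |τ| ≤ π) :
    planeToComplex (((-‖Y' (s + τ)‖ ^ 2 / ‖secant Y s τ‖ ^ 2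
        + 2 * ⟪secant Y s τ, Y' (s + τ)⟫ ^ 2 / ‖secant Y s τ‖ ^ 4 - 1) / τ
        + cscKernel τ) • secant Y s τ) =
      contourIntegrand (planeToComplex ∘ Y) (planeToComplex ∘ Y') s τ := by
  set a := secant (planeToComplex ∘ Y) s τ with ha
  set p := secantDeriv (planeToComplex ∘ Y) (planeToComplex ∘ Y') s τ with hp
  have ha_eq : planeToComplex (secant Y s τ) = a :=
    (secant_linearMap_comp planeToComplex.toLinearEquiv.toLinearMap Y s τ).symm
  have hvel : planeToComplex (Y' (s + τ)) = a + τ * p := by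
    rw [← Complex.real_smul, hp, smul_secantDeriv hτ, Function.comp_apply, ← ha]
    abel
  have ha₀ : a ≠ 0 := by
    rw [← norm_pos_iff, ← ha_eq, planeToComplex.norm_map]
    exact hl.trans_le (hY.le_norm_secant hτ hτπ)
  rw [map_smul, ← planeToComplex.inner_map_map, ← planeToComplex.norm_map (Y' _),
    ← planeToComplex.norm_map (secant _ _ _), ha_eq, hvel, Complex.real_smul]
  exact ofReal_mul_eq_remainderIntegrand ha₀ hτ

theorem gY_eq_planeToComplex_symm (hl : 0 < l) (hY : WellStretched Y l) (s : ℝ) :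
    gY Y Y' s = planeToComplex.symm (((4 * π)⁻¹ : ℝ) •
      ∫ τ in (-π)..π, contourIntegrand (planeToComplex ∘ Y) (planeToComplex ∘ Y') s τ) := by
  have hπ : -π ≤ π := by linarith [pi_pos]
  rw [LinearIsometryEquiv.eq_symm_apply, gY, map_smul]
  congr 1
  rw [intervalIntegral.integral_of_le hπ, intervalIntegral.integral_of_le hπ]
  refine (planeToComplex.toContinuousLinearEquiv.integral_comp_comm _).symm.trans
    (integral_congr_ae ?_)
  filter_upwards [ae_restrict_mem measurableSet_Ioc, ae_restrict_of_ae (Measure.ae_ne volume 0)]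
    with τ hτπ hτ
  exact planeToComplex_smul_secant hl hY hτ (abs_le.2 ⟨hτπ.1.le, hτπ.2⟩)

end PlaneIntegrand

section PlaneSobolev

variable {Y Z : ℝ → E2} {σ ρ : ℝ}

theorem coefSq_eq_sum_circleCoeff (Y : ℝ → E2) (k : ℤ) :
    coefSq Y k = (2 * π) ^ 2 * ∑ j, ‖circleCoeff (fun s => (Y s j : ℂ)) k‖ ^ 2 := by
  simp only [coefSq, circleCoeff_eq_integral, Finset.mul_sum, norm_mul, norm_inv,
    Complex.normSq_eq_norm_sq, mul_pow, inv_pow, Complex.norm_real, norm_of_nonneg pi_pos.le,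
    Complex.norm_ofNat]
  refine Finset.sum_congr rfl fun j _ => ?_
  field_simp

theorem coefSq_nonneg (Y : ℝ → E2) (k : ℤ) : 0 ≤ coefSq Y k :=
  Finset.sum_nonneg fun _ _ => Complex.normSq_nonneg _

theorem norm_sub_sq_le_two_mul {E : Type*} [SeminormedAddCommGroup E] (x y : E) :
    ‖x - y‖ ^ 2 ≤ 2 * (‖x‖ ^ 2 + ‖y‖ ^ 2) :=
  (pow_le_pow_left₀ (norm_nonneg _) (norm_sub_le x y) 2).trans add_sq_le

theorem coefSq_sub_le (hY : Continuous Y) (hZ : Continuous Z) (k : ℤ) :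
    coefSq (Y - Z) k ≤ 2 * (coefSq Y k + coefSq Z k) := by
  simp only [coefSq_eq_sum_circleCoeff]
  rw [← mul_add, mul_left_comm, ← Finset.sum_add_distrib,
    Finset.mul_sum _ _ (2 : ℝ)]
  gcongr with j
  simp only [Pi.sub_apply, PiLp.sub_apply, Complex.ofReal_sub]
  rw [circleCoeff_sub (by fun_prop) (by fun_prop)]
  exact norm_sub_sq_le_two_mul _ _

theorem norm_circleCoeff_planeToComplex_comp_sq_le (hY : Continuous Y) (k : ℤ) :
    (2 * π) ^ 2 * ‖circleCoeff (planeToComplex ∘ Y) k‖ ^ 2 ≤ 2 * coefSq Y k := by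
  have hdecomp : planeToComplex ∘ Y = fun s => (Y s 0 : ℂ) - -Complex.I * (Y s 1 : ℂ) := by
    funext s
    rw [Function.comp_apply, planeToComplex_apply]
    ring
  rw [coefSq_eq_sum_circleCoeff, mul_left_comm, Fin.sum_univ_two, hdecomp,
    circleCoeff_sub (by fun_prop) (by fun_prop), circleCoeff_const_mul]
  gcongr
  simpa using norm_sub_sq_le_two_mul (circleCoeff (fun s => (Y s 0 : ℂ)) k)
    (-Complex.I * circleCoeff (fun s => (Y s 1 : ℂ)) k)

theorem sobSummand_of_ne_zero (σ : ℝ) (Y : ℝ → E2) {k : ℤ} (hk : k ≠ 0) :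
    sobSummand σ Y k = |(k : ℝ)| ^ (2 * σ) * coefSq Y k :=
  if_neg hk

theorem sobSummand_nonneg (σ : ℝ) (Y : ℝ → E2) (k : ℤ) : 0 ≤ sobSummand σ Y k := by
  have := coefSq_nonneg Y k
  unfold sobSummand
  positivity

theorem sobSummand_sub_le (h : σ ≤ ρ) (hY : Continuous Y) (hZ : Continuous Z) (k : ℤ) :
    sobSummand σ (Y - Z) k ≤ 2 * (sobSummand ρ Y k + sobSummand ρ Z k) := by
  rcases eq_or_ne k 0 with rfl | hk
  · simp [sobSummand]
  have hk₁ : 1 ≤ |(k : ℝ)| := mod_cast Int.one_le_abs hk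
  simp only [sobSummand_of_ne_zero _ _ hk, ← mul_add, mul_left_comm (2 : ℝ)]
  gcongr
  · exact coefSq_nonneg _ k
  · exact coefSq_sub_le hY hZ k

theorem summable_sobSummand_sub (h : σ ≤ ρ) (hY : Continuous Y) (hZ : Continuous Z)
    (hsY : Summable (sobSummand ρ Y)) (hsZ : Summable (sobSummand ρ Z)) :
    Summable (sobSummand σ (Y - Z)) :=
  .of_nonneg_of_le (sobSummand_nonneg σ _) (sobSummand_sub_le h hY hZ)
    ((hsY.add hsZ).mul_left 2)

theorem two_pi_mul_sq_intWeight_mul_le (hY : Continuous Y) (σ : ℝ) (k : ℤ) :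
    ENNReal.ofReal (2 * π) * (intWeight σ k * ‖circleCoeff (planeToComplex ∘ Y) k‖ₑ) ^ 2 ≤
      ENNReal.ofReal (sobSummand σ Y k) := by
  rcases eq_or_ne k 0 with rfl | hk
  · simp [intWeight]
  have hk₀ : 0 < |(k : ℝ)| := by positivity
  rw [intWeight_of_ne_zero _ hk, ← ofReal_norm, ← ofReal_norm, Real.norm_eq_abs,
    ENNReal.ofReal_rpow_of_pos hk₀, ← ENNReal.ofReal_mul (by positivity),
    ← ENNReal.ofReal_pow (by positivity), ← ENNReal.ofReal_mul two_pi_pos.le,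
    sobSummand_of_ne_zero _ _ hk]
  refine ENNReal.ofReal_le_ofReal ?_
  rw [mul_pow, ← rpow_mul_natCast hk₀.le, mul_left_comm, mul_comm σ, Nat.cast_ofNat]
  gcongr
  have hcoef := norm_circleCoeff_planeToComplex_comp_sq_le hY k
  nlinarith [pi_gt_three, sq_nonneg ‖circleCoeff (planeToComplex ∘ Y) k‖, coefSq_nonneg Y k]

theorem sobolevSeminorm_planeToComplex_comp_le (hY : Continuous Y)
    (hs : Summable (sobSummand σ Y)) :
    sobolevSeminorm σ (planeToComplex ∘ Y) ≤ ENNReal.ofReal (sobNorm σ Y) := by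
  rw [← ENNReal.pow_le_pow_left_iff two_ne_zero, sobolevSeminorm, mul_pow, eLpNorm_two_sq,
    lintegral_count, ← ENNReal.ofReal_pow (sqrt_nonneg _), Real.sq_sqrt two_pi_pos.le, sobNorm,
    ← ENNReal.ofReal_pow (sqrt_nonneg _), Real.sq_sqrt (tsum_nonneg (sobSummand_nonneg σ Y)),
    ENNReal.ofReal_tsum_of_nonneg (sobSummand_nonneg σ Y) hs, ← ENNReal.tsum_mul_left]
  exact ENNReal.tsum_le_tsum fun k => two_pi_mul_sq_intWeight_mul_le hY σ k

end PlaneSobolev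

section PlaneEstimate

variable {Y Y' Y₁ Y₁' Y₂ Y₂' : ℝ → E2} {l K θ δ ε : ℝ}

theorem IsC1Loop.planeToComplex_comp (h : IsC1Loop Y Y') :
    IsC1Loop (planeToComplex ∘ Y) (planeToComplex ∘ Y') :=
  h.continuousLinearMap_comp planeToComplex.toContinuousLinearEquiv.toContinuousLinearMap

theorem IsC1Loop.isStretchedLoop_planeToComplex_comp (h : IsC1Loop Y Y') (hl : 0 < l)
    (hY : WellStretched Y l) (hθ : 0 ≤ θ) (hs : Summable (sobSummand (θ + 2) Y))
    (hK : sobNorm (θ + 2) Y ≤ K) :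
    IsStretchedLoop (planeToComplex ∘ Y) (planeToComplex ∘ Y') l K where
  toIsC1Loop := h.planeToComplex_comp
  pos := hl
  wellStretched := hY.linearIsometry_comp planeToComplex.toLinearIsometry
  halfHolder := h.planeToComplex_comp.halfHolder_deriv hθ ((sqrt_nonneg _).trans hK)
    ((sobolevSeminorm_planeToComplex_comp_le h.continuous hs).trans
      (ENNReal.ofReal_le_ofReal hK))

theorem normL2v_le_of_eLpNorm_le {g : ℝ → E2} (hg : MemLp g 2 periodMeasure) {x : ℝ}
    (hx : 0 ≤ x) (h : eLpNorm g 2 periodMeasure ≤ ENNReal.ofReal x) : normL2v g ≤ x := by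
  refine le_trans (le_of_eq ?_) (ENNReal.toReal_le_of_le_ofReal hx h)
  rw [toReal_eLpNorm hg.1, normL2v, intervalIntegral.integral_of_le (by linarith [pi_pos]),
    lpNorm_eq_integral_norm_rpow_toReal two_ne_zero ENNReal.ofNat_ne_top hg.1, sqrt_eq_rpow]
  simp

theorem intervalIntegrable_norm_sq {E : Type*} [NormedAddCommGroup E] {g : ℝ → E}
    (hg : MemLp g 2 periodMeasure) :
    IntervalIntegrable (fun s => ‖g s‖ ^ 2) volume (-π) π :=
  (intervalIntegrable_iff_integrableOn_Ioc_of_le (by linarith [pi_pos])).2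
    (hg.integrable_norm_pow two_ne_zero)

theorem aestronglyMeasurable_gY (h : IsC1Loop Y Y') (hl : 0 < l) (hY : WellStretched Y l) :
    AEStronglyMeasurable (gY Y Y') periodMeasure := by
  rw [funext (gY_eq_planeToComplex_symm hl hY)]
  exact planeToComplex.symm.continuous.comp_aestronglyMeasurable
    (h.planeToComplex_comp.measurable_integral_contourIntegrand.aestronglyMeasurable.const_smul
      (4 * π)⁻¹)

theorem eLpNorm_gY_sub_le (h₁ : IsC1Loop Y₁ Y₁') (h₂ : IsC1Loop Y₂ Y₂') (hl : 0 < l)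
    (hw₁ : WellStretched Y₁ l) (hw₂ : WellStretched Y₂ l) (hθ : 0 ≤ θ) (hδ : 0 ≤ δ)
    (hθδ : 1 / 2 < θ + δ) (hε₀ : 0 < ε) (hε₁ : ε ≤ 1) (hσ : δ + ε ≤ θ + 2)
    (hs₁ : Summable (sobSummand (θ + 2) Y₁)) (hs₂ : Summable (sobSummand (θ + 2) Y₂)) :
    eLpNorm (gY Y₁ Y₁' - gY Y₂ Y₂') 2 periodMeasure ≤
      ENNReal.ofReal (4 * (contourConst θ δ ε).toReal / l ^ 2 *
        (sobNorm (θ + 2) Y₁ + sobNorm (θ + 2) Y₂) ^ 2 * sobNorm (δ + ε) (Y₁ - Y₂)) := by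
  have hc : ‖(4 * π)⁻¹‖ ≤ 1 := by
    rw [norm_inv, norm_of_nonneg (by positivity)]
    exact inv_le_one_of_one_le₀ (by linarith [pi_gt_three])
  have hstr₁ := h₁.isStretchedLoop_planeToComplex_comp hl hw₁ hθ hs₁
    (le_add_of_nonneg_right (sqrt_nonneg _) : _ ≤ _ + sobNorm (θ + 2) Y₂)
  have hstr₂ := h₂.isStretchedLoop_planeToComplex_comp hl hw₂ hθ hs₂
    (le_add_of_nonneg_left (sqrt_nonneg _) : _ ≤ sobNorm (θ + 2) Y₁ + _)
  have hsub : planeToComplex ∘ (Y₁ - Y₂) = planeToComplex ∘ Y₁ - planeToComplex ∘ Y₂ :=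
    funext fun s => map_sub planeToComplex _ _
  calc eLpNorm (gY Y₁ Y₁' - gY Y₂ Y₂') 2 periodMeasure
      ≤ eLpNorm (fun s =>
          (∫ τ in (-π)..π, contourIntegrand (planeToComplex ∘ Y₁) (planeToComplex ∘ Y₁') s τ) -
          ∫ τ in (-π)..π, contourIntegrand (planeToComplex ∘ Y₂) (planeToComplex ∘ Y₂') s τ)
          2 periodMeasure := by
        refine eLpNorm_mono fun s => ?_
        rw [Pi.sub_apply, gY_eq_planeToComplex_symm hl hw₁, gY_eq_planeToComplex_symm hl hw₂,
          ← map_sub, LinearIsometryEquiv.norm_map, ← smul_sub, norm_smul]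
        exact mul_le_of_le_one_left (norm_nonneg _) hc
    _ ≤ contourConst θ δ ε * (ENNReal.ofReal ((sobNorm (θ + 2) Y₁ + sobNorm (θ + 2) Y₂) ^ 2 /
          (l / 2) ^ 2) * sobolevSeminorm (δ + ε) (planeToComplex ∘ (Y₁ - Y₂))) := by
        rw [hsub]
        exact hstr₁.eLpNorm_integral_contourIntegrand_sub_le hstr₂ hθ hδ hε₀.le hε₁
          ((sobolevSeminorm_planeToComplex_comp_le h₁.continuous hs₁).trans
            (ENNReal.ofReal_le_ofReal (le_add_of_nonneg_right (sqrt_nonneg _))))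
          ((sobolevSeminorm_planeToComplex_comp_le h₂.continuous hs₂).trans
            (ENNReal.ofReal_le_ofReal (le_add_of_nonneg_left (sqrt_nonneg _))))
    _ ≤ ENNReal.ofReal (contourConst θ δ ε).toReal *
          (ENNReal.ofReal ((sobNorm (θ + 2) Y₁ + sobNorm (θ + 2) Y₂) ^ 2 / (l / 2) ^ 2) *
            ENNReal.ofReal (sobNorm (δ + ε) (Y₁ - Y₂))) := by
        rw [ENNReal.ofReal_toReal (contourConst_ne_top hθδ hε₀)]
        gcongr
        exact sobolevSeminorm_planeToComplex_comp_le (h₁.sub h₂).continuous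
          (summable_sobSummand_sub hσ h₁.continuous h₂.continuous hs₁ hs₂)
    _ = _ := by
        rw [← ENNReal.ofReal_mul (by positivity), ← ENNReal.ofReal_mul (by positivity)]
        congr 1
        field

end PlaneEstimate

theorem statement18_general (θ β : ℝ) (hβ1 : 0 < β) (hβ2 : β < min θ (1 / 2)) :
    ∃ C : ℝ, 0 < C ∧
      ∀ (Y₁ Y₁' Y₂ Y₂' : ℝ → E2) (lam : ℝ),
        0 < lam →
        Function.Periodic Y₁ (2 * π) →
        (∀ s, HasDerivAt Y₁ (Y₁' s) s) →
        Continuous Y₁' →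
        Function.Periodic Y₂ (2 * π) →
        (∀ s, HasDerivAt Y₂ (Y₂' s) s) →
        Continuous Y₂' →
        (∀ s₁ s₂ : ℝ, |s₁ - s₂| ≤ π → lam * |s₁ - s₂| ≤ ‖Y₁ s₁ - Y₁ s₂‖) →
        (∀ s₁ s₂ : ℝ, |s₁ - s₂| ≤ π → lam * |s₁ - s₂| ≤ ‖Y₂ s₁ - Y₂ s₂‖) →
        Summable (sobSummand (2 + θ) Y₁) →
        Summable (sobSummand (2 + θ) Y₂) →
        IntervalIntegrable (fun s => ‖gY Y₁ Y₁' s - gY Y₂ Y₂' s‖ ^ 2) volume (-π) π ∧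
        normL2v (fun s => gY Y₁ Y₁' s - gY Y₂ Y₂' s)
          ≤ C / lam ^ 2 * (sobNorm (2 + θ) Y₁ + sobNorm (2 + θ) Y₂) ^ 2 *
              sobNorm (1 / 2 - β) (fun s => Y₁ s - Y₂ s) := by
  obtain ⟨ε, hε, hεmin⟩ := exists_between (sub_pos.2 hβ2)
  obtain ⟨hεθ, hεβ⟩ := lt_min_iff.1 (lt_sub_iff_add_lt.1 hεmin)
  set δ := 1 / 2 - β - ε with hδ
  have hθδ : 1 / 2 < θ + δ := by linarith
  refine ⟨4 * (contourConst θ δ ε).toReal, mul_pos four_pos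
    (ENNReal.toReal_pos contourConst_ne_zero (contourConst_ne_top hθδ hε)), ?_⟩
  intro Y₁ Y₁' Y₂ Y₂' lam hlam hp₁ hd₁ hc₁ hp₂ hd₂ hc₂ hw₁ hw₂ hs₁ hs₂
  rw [add_comm 2 θ] at *
  have h₁ : IsC1Loop Y₁ Y₁' := ⟨hp₁, hd₁, hc₁⟩
  have h₂ : IsC1Loop Y₂ Y₂' := ⟨hp₂, hd₂, hc₂⟩
  have hle := eLpNorm_gY_sub_le h₁ h₂ hlam hw₁ hw₂ (by linarith) (by linarith) hθδ hε
    (by linarith) (by linarith) hs₁ hs₂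
  rw [hδ, sub_add_cancel, ← hδ] at hle
  have hmem : MemLp (gY Y₁ Y₁' - gY Y₂ Y₂') 2 periodMeasure :=
    ⟨(aestronglyMeasurable_gY h₁ hlam hw₁).sub (aestronglyMeasurable_gY h₂ hlam hw₂),
      hle.trans_lt ENNReal.ofReal_lt_top⟩
  exact ⟨intervalIntegrable_norm_sq hmem, normL2v_le_of_eLpNorm_le hmem
    (mul_nonneg (by positivity) (sqrt_nonneg _)) hle⟩

/-- The improved `L²` estimate for `g_{Y₁} − g_{Y₂}`. -/
theorem statement18 (θ β : ℝ) (hθ1 : 1 / 4 ≤ θ) (hθ2 : θ < 1)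
    (hβ1 : 0 < β) (hβ2 : β < min θ (1 / 2)) :
    ∃ C : ℝ, 0 < C ∧
      ∀ (Y₁ Y₁' Y₁'' Y₂ Y₂' Y₂'' : ℝ → E2) (lam : ℝ),
        0 < lam →
        Function.Periodic Y₁ (2 * π) →
        (∀ s, HasDerivAt Y₁ (Y₁' s) s) →
        Continuous Y₁' →
        LocallyIntegrable Y₁'' volume →
        (∀ a b : ℝ, a ≤ b → Y₁' b - Y₁' a = ∫ u in a..b, Y₁'' u) →
        Function.Periodic Y₂ (2 * π) →
        (∀ s, HasDerivAt Y₂ (Y₂' s) s) →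
        Continuous Y₂' →
        LocallyIntegrable Y₂'' volume →
        (∀ a b : ℝ, a ≤ b → Y₂' b - Y₂' a = ∫ u in a..b, Y₂'' u) →
        -- both satisfy the well-stretched condition with constant `lam`
        (∀ s₁ s₂ : ℝ, |s₁ - s₂| ≤ π → lam * |s₁ - s₂| ≤ ‖Y₁ s₁ - Y₁ s₂‖) →
        (∀ s₁ s₂ : ℝ, |s₁ - s₂| ≤ π → lam * |s₁ - s₂| ≤ ‖Y₂ s₁ - Y₂ s₂‖) →
        -- `‖Y₁‖_{Ḣ^{2+θ}(𝕋)}, ‖Y₂‖_{Ḣ^{2+θ}(𝕋)} < ∞`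
        Summable (sobSummand (2 + θ) Y₁) →
        Summable (sobSummand (2 + θ) Y₂) →
        IntervalIntegrable (fun s => ‖gY Y₁ Y₁' s - gY Y₂ Y₂' s‖ ^ 2) volume (-π) π ∧
        normL2v (fun s => gY Y₁ Y₁' s - gY Y₂ Y₂' s)
          ≤ C / lam ^ 2 * (sobNorm (2 + θ) Y₁ + sobNorm (2 + θ) Y₂) ^ 2 *
              sobNorm (1 / 2 - β) (fun s => Y₁ s - Y₂ s) := by
  obtain ⟨C, hC, h⟩ := statement18_general θ β hβ1 hβ2
  exact ⟨C, hC, fun Y₁ Y₁' _ Y₂ Y₂' _ lam hlam hp₁ hd₁ hc₁ _ _ hp₂ hd₂ hc₂ _ _ =>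
    h Y₁ Y₁' Y₂ Y₂' lam hlam hp₁ hd₁ hc₁ hp₂ hd₂ hc₂⟩
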